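/- arXiv:1105.1067 — 9 statements merged into one kernel-verified Lean document; each statement's English description precedes it below -/
import Mathlib

section
/- Let Θ = (α,β,γ) be an isotopism of order n, and let I be the ideal of the polynomial ring ℚ[x_{ijk} : i,j,k ∈ {1,...,n}] generated by the polynomials ∑_{i=1}^n x_{ijk} − 1 for all j,k; ∑_{j=1}^n x_{ijk} − 1 for all i,k; ∑_{k=1}^n x_{ijk} − 1 for all i,j; x_{ijk}·(x_{ijk} − 1) for all i,j,k; and x_{ijk} − x_{α(i)β(j)γ(k)} for all i,j,k. Then the dimension of the quotient ring ℚ[x_{ijk}]/I as a vector space over ℚ equals Δ(Θ), the number of Latin squares of order n having Θ as an autotopism. -/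
/-!
The idempotent equations force every zero of `I` into the finite grid `{0, 1} ^ (n³)`, and by the
combinatorial Nullstellensatz they put into `I` every polynomial vanishing on that grid.
Interpolation on the grid then shows that `I` consists of all polynomials vanishing on its zero
set `Z`, so evaluation identifies the quotient with the space of functions on `Z`. Finally, the
zeros are exactly the indicators of the cells `(i, j, L i j)` of the Latin squares `L` that have
`(α, β, γ)` as an autotopism.
-/

open MvPolynomial

/-- A Latin square of order `n`: each row and each column is a bijection. -/
def IsLatinSquare {n : ℕ} (L : Fin n → Fin n → Fin n) : Prop :=
  (∀ i, Function.Bijective (L i)) ∧ (∀ j, Function.Bijective fun i => L i j)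

/-- `(α, β, γ)` is an autotopism of the Latin square `L`. -/
def IsAutotopism {n : ℕ} (α β γ : Equiv.Perm (Fin n)) (L : Fin n → Fin n → Fin n) : Prop :=
  ∀ i j, L (α i) (β j) = γ (L i j)

section ZeroDimensionalIdeals

variable {σ K : Type*} [Field K]

theorem vanishingIdeal_singleton_injective :
    Function.Injective fun x : σ → K => vanishingIdeal K {x} := by
  intro x y (h : vanishingIdeal K {x} = vanishingIdeal K {y})
  funext s
  have hmem : (X s - C (x s) : MvPolynomial σ K) ∈ vanishingIdeal K {y} := h ▸ by simp
  simpa [sub_eq_zero, eq_comm] using hmem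

theorem exists_forall_eval_eq_of_finite {V : Set (σ → K)} (hV : V.Finite) (f : (σ → K) → K) :
    ∃ p : MvPolynomial σ K, ∀ x ∈ V, eval x p = f x := by
  have := hV.to_subtype
  have hcoprime : Pairwise (Function.onFun IsCoprime fun x : V => vanishingIdeal K {x.1}) :=
    fun x y hxy => Ideal.isCoprime_of_isMaximal
      fun h => hxy (Subtype.ext (vanishingIdeal_singleton_injective h))
  obtain ⟨p, hp⟩ := Ideal.exists_forall_sub_mem_ideal hcoprime fun x => C (f x)
  exact ⟨p, fun x hx => by simpa [sub_eq_zero] using hp ⟨x, hx⟩⟩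

theorem finrank_quotient_vanishingIdeal {V : Set (σ → K)} (hV : V.Finite) :
    Module.finrank K (MvPolynomial σ K ⧸ vanishingIdeal K V) = Nat.card V := by
  have := hV.fintype
  let evalOn : MvPolynomial σ K →ₐ[K] (V → K) := AlgHom.pi fun x => aeval x.1
  have hsurj : Function.Surjective evalOn := fun f => by
    obtain ⟨p, hp⟩ := exists_forall_eval_eq_of_finite hV (Function.extend Subtype.val f 0)
    refine ⟨p, funext fun x => (hp x x.2).trans ?_⟩
    exact Subtype.val_injective.extend_apply f 0 x
  have hker : vanishingIdeal K V = RingHom.ker evalOn := by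
    ext p
    simp [evalOn, RingHom.mem_ker, funext_iff]
  rw [hker, (Ideal.quotientKerAlgEquivOfSurjective hsurj).toLinearEquiv.finrank_eq,
    Module.finrank_fintype_fun_eq_card, Nat.card_eq_fintype_card]

theorem zeroLocus_vanishingIdeal_of_finite {V : Set (σ → K)} (hV : V.Finite) :
    zeroLocus K (vanishingIdeal K V) = V := by
  classical
  refine Set.Subset.antisymm (fun x hx => ?_) (zeroLocus_vanishingIdeal_le V)
  by_contra hxV
  obtain ⟨p, hp⟩ := exists_forall_eval_eq_of_finite (hV.insert x) (Pi.single x 1)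
  have hpV : p ∈ vanishingIdeal K V := fun y hy => by
    rw [aeval_eq_eval, hp y (Set.mem_insert_of_mem x hy),
      Pi.single_eq_of_ne (ne_of_mem_of_not_mem hy hxV)]
  simpa [hp x (Set.mem_insert x V)] using hx p hpV

theorem vanishingIdeal_zeroLocus_of_vanishingIdeal_le {G : Set (σ → K)} (hG : G.Finite)
    {I : Ideal (MvPolynomial σ K)} (hGI : vanishingIdeal K G ≤ I) :
    vanishingIdeal K (zeroLocus K I) = I := by
  classical
  refine le_antisymm (fun p hp => ?_) (le_vanishingIdeal_zeroLocus I)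
  have hlocal (x : σ → K) : ∃ q ∈ I, eval x q = eval x p := by
    by_cases hx : x ∈ zeroLocus K I
    · exact ⟨0, I.zero_mem, by simpa [eq_comm] using hp x hx⟩
    · obtain ⟨q, hqI, hqx⟩ : ∃ q ∈ I, eval x q ≠ 0 := by simpa using hx
      exact ⟨C (eval x p / eval x q) * q, I.mul_mem_left _ hqI, by simp [hqx]⟩
  -- Interpolating the local solutions `q x` over `G` gives `r ∈ I` that agrees with `p` on `G`.
  choose q hqI hq using hlocal
  choose e he using fun x : σ → K => exists_forall_eval_eq_of_finite hG (Pi.single x 1)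
  let r : MvPolynomial σ K := ∑ x ∈ hG.toFinset, e x * q x
  have hrI : r ∈ I := I.sum_mem fun x _ => I.mul_mem_left _ (hqI x)
  have hpr : p - r ∈ vanishingIdeal K G := fun y hy => by
    simp [r, he _ y hy, Pi.single_apply, hq, hy]
  exact (I.sub_mem_iff_left hrI).1 (hGI hpr)

theorem finrank_quotient_eq_card_zeroLocus_of_vanishingIdeal_le {G : Set (σ → K)} (hG : G.Finite)
    {I : Ideal (MvPolynomial σ K)} (hGI : vanishingIdeal K G ≤ I) :
    Module.finrank K (MvPolynomial σ K ⧸ I) = Nat.card (zeroLocus K I) := by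
  have hsub : zeroLocus K I ⊆ G :=
    (zeroLocus_anti_mono hGI).trans (zeroLocus_vanishingIdeal_of_finite hG).le
  rw [← finrank_quotient_vanishingIdeal (hG.subset hsub),
    vanishingIdeal_zeroLocus_of_vanishingIdeal_le hG hGI]

theorem vanishingIdeal_grid_le_of_prod_X_sub_C_mem [Finite σ] {S : σ → Finset K}
    {I : Ideal (MvPolynomial σ K)} (hI : ∀ s, ∏ a ∈ S s, (X s - C a) ∈ I) :
    vanishingIdeal K {x | ∀ s, x s ∈ S s} ≤ I := by
  intro p hp
  by_cases hS : ∀ s, (S s).Nonempty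
  · obtain ⟨h, -, rfl⟩ := combinatorial_nullstellensatz_exists_linearCombination S hS p
      fun x hx => by simpa using hp x hx
    exact I.sum_mem fun s _ => I.mul_mem_left _ (hI s)
  · obtain ⟨s, hs⟩ : ∃ s, S s = ∅ := by simpa using hS
    have hone : (1 : MvPolynomial σ K) ∈ I := by simpa [hs] using hI s
    exact (I.eq_top_iff_one.2 hone) ▸ Submodule.mem_top

theorem finrank_quotient_eq_card_zeroLocus_of_prod_X_sub_C_mem [Finite σ] {S : σ → Finset K}
    {I : Ideal (MvPolynomial σ K)} (hI : ∀ s, ∏ a ∈ S s, (X s - C a) ∈ I) :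
    Module.finrank K (MvPolynomial σ K ⧸ I) = Nat.card (zeroLocus K I) :=
  finrank_quotient_eq_card_zeroLocus_of_vanishingIdeal_le
    (Set.Finite.pi' fun s => (S s).finite_toSet) (vanishingIdeal_grid_le_of_prod_X_sub_C_mem hI)

end ZeroDimensionalIdeals

theorem sum_ite_one_zero_eq_one_iff_existsUnique {ι R : Type*} [Fintype ι] [NonAssocSemiring R]
    [CharZero R] (p : ι → Prop) [DecidablePred p] :
    ∑ i, (if p i then (1 : R) else 0) = 1 ↔ ∃! i, p i := by
  rw [Finset.sum_boole, Nat.cast_eq_one, Fintype.existsUnique_iff_card_one]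

section CellIndicator

variable {ι κ τ : Type*} [DecidableEq τ]

/-- The indicator function of the set of cells `(i, j, L i j)` of an array `L`, the `0/1`-point
that encodes `L` in the variables `x_{ijk}`. -/
def cellIndicator (R : Type*) [Zero R] [One R] (L : ι → κ → τ) : ι × κ × τ → R :=
  fun c => if L c.1 c.2.1 = c.2.2 then 1 else 0

variable {R : Type*}

theorem cellIndicator_injective [Zero R] [One R] [NeZero (1 : R)] :
    Function.Injective (cellIndicator R : (ι → κ → τ) → ι × κ × τ → R) := by
  intro L M h
  funext i j
  simpa [cellIndicator, eq_comm] using congrFun h (i, j, L i j)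

theorem exists_cellIndicator_eq [Fintype τ] [NonAssocSemiring R] [CharZero R] {x : ι × κ × τ → R}
    (hbinary : ∀ c, x c = 0 ∨ x c = 1) (hsum : ∀ i j, ∑ k, x (i, j, k) = 1) :
    ∃ L : ι → κ → τ, cellIndicator R L = x := by
  classical
  have hx (c) : x c = if x c = 1 then 1 else 0 := by
    rcases hbinary c with h | h <;> simp [h]
  have hunique (i j) : ∃! k, x (i, j, k) = 1 := by
    refine (sum_ite_one_zero_eq_one_iff_existsUnique (R := R) _).1 ?_
    exact (Finset.sum_congr rfl fun k _ => (hx _).symm).trans (hsum i j)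
  choose L hL hLunique using hunique
  refine ⟨L, funext fun ⟨i, j, k⟩ => ?_⟩
  have hgraph : L i j = k ↔ x (i, j, k) = 1 :=
    ⟨fun h => h ▸ hL i j, fun h => (hLunique i j k h).symm⟩
  simp only [cellIndicator, hgraph, ← hx]

end CellIndicator

section AutotopismIdeal

/-- The ideal `I` with coefficients in `K`. When `K` is a field of characteristic zero, its zeros
are the indicators `cellIndicator K L` of the Latin squares `L` with autotopism `(α, β, γ)`. -/
noncomputable def autotopismIdeal (K : Type*) [CommRing K] {n : ℕ} (α β γ : Equiv.Perm (Fin n)) :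
    Ideal (MvPolynomial (Fin n × Fin n × Fin n) K) :=
  Ideal.span
    ({p | ∃ j k, p = (∑ i, X (i, j, k)) - 1} ∪
     {p | ∃ i k, p = (∑ j, X (i, j, k)) - 1} ∪
     {p | ∃ i j, p = (∑ k, X (i, j, k)) - 1} ∪
     {p | ∃ i j k, p = X (i, j, k) * (X (i, j, k) - 1)} ∪
     {p | ∃ i j k, p = X (i, j, k) - X (α i, β j, γ k)})

variable {K : Type*} [Field K] {n : ℕ} {α β γ : Equiv.Perm (Fin n)}

theorem mem_zeroLocus_autotopismIdeal_iff {x : Fin n × Fin n × Fin n → K} :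
    x ∈ zeroLocus K (autotopismIdeal K α β γ) ↔
      (∀ j k, ∑ i, x (i, j, k) = 1) ∧ (∀ i k, ∑ j, x (i, j, k) = 1) ∧
      (∀ i j, ∑ k, x (i, j, k) = 1) ∧ (∀ c, x c = 0 ∨ x c = 1) ∧
      ∀ i j k, x (i, j, k) = x (α i, β j, γ k) := by
  rw [autotopismIdeal, zeroLocus_span]
  simp [or_imp, forall_and, sub_eq_zero, and_assoc, @forall_comm (MvPolynomial _ _)]

theorem cellIndicator_mem_zeroLocus_autotopismIdeal_iff [CharZero K]
    {L : Fin n → Fin n → Fin n} :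
    cellIndicator K L ∈ zeroLocus K (autotopismIdeal K α β γ) ↔
      IsLatinSquare L ∧ IsAutotopism α β γ L := by
  have hbinary (c) : cellIndicator K L c = 0 ∨ cellIndicator K L c = 1 :=
    (ite_eq_or_eq _ _ _).symm
  have hinvariant : (∀ i j k, cellIndicator K L (i, j, k) = cellIndicator K L (α i, β j, γ k)) ↔
      IsAutotopism α β γ L :=
    ⟨fun h i j => by simpa [cellIndicator] using h i j (L i j),
      fun h i j k => by simp [cellIndicator, h i j]⟩
  rw [mem_zeroLocus_autotopismIdeal_iff, hinvariant]
  simp only [cellIndicator, sum_ite_one_zero_eq_one_iff_existsUnique, IsLatinSquare,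
    Function.bijective_iff_existsUnique]
  exact ⟨fun ⟨hcol, hrow, _, _, hautotopism⟩ => ⟨⟨hrow, hcol⟩, hautotopism⟩,
    fun ⟨⟨hrow, hcol⟩, hautotopism⟩ =>
      ⟨hcol, hrow, fun _ _ => existsUnique_eq', hbinary, hautotopism⟩⟩

theorem zeroLocus_autotopismIdeal [CharZero K] :
    zeroLocus K (autotopismIdeal K α β γ) =
      cellIndicator K '' {L | IsLatinSquare L ∧ IsAutotopism α β γ L} := by
  ext x
  constructor
  · intro hx
    obtain ⟨-, -, hsum, hbinary, -⟩ := mem_zeroLocus_autotopismIdeal_iff.1 hx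
    obtain ⟨L, rfl⟩ := exists_cellIndicator_eq hbinary hsum
    exact ⟨L, cellIndicator_mem_zeroLocus_autotopismIdeal_iff.1 hx, rfl⟩
  · rintro ⟨L, hL, rfl⟩
    exact cellIndicator_mem_zeroLocus_autotopismIdeal_iff.2 hL

end AutotopismIdeal

theorem finrank_quotient_eq_card_latinSquares_autotopism_general
    (K : Type*) [Field K] [CharZero K] (n : ℕ) (α β γ : Equiv.Perm (Fin n)) :
    Module.finrank K
      (MvPolynomial (Fin n × Fin n × Fin n) K ⧸ autotopismIdeal K α β γ) =
      Nat.card {L : Fin n → Fin n → Fin n // IsLatinSquare L ∧ IsAutotopism α β γ L} := by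
  classical
  have hbinary (c) : ∏ a ∈ ({0, 1} : Finset K), (X c - C a) ∈ autotopismIdeal K α β γ :=
    Ideal.subset_span (.inl (.inr ⟨c.1, c.2.1, c.2.2, by simp⟩))
  rw [finrank_quotient_eq_card_zeroLocus_of_prod_X_sub_C_mem hbinary, zeroLocus_autotopismIdeal]
  exact Nat.card_image_of_injective cellIndicator_injective _

theorem finrank_quotient_eq_card_latinSquares_autotopism
    (n : ℕ) (α β γ : Equiv.Perm (Fin n)) :
    Module.finrank ℚ
      (MvPolynomial (Fin n × Fin n × Fin n) ℚ ⧸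
        Ideal.span
          ({p : MvPolynomial (Fin n × Fin n × Fin n) ℚ | ∃ j k, p = (∑ i, X (i, j, k)) - 1} ∪
           {p | ∃ i k, p = (∑ j, X (i, j, k)) - 1} ∪
           {p | ∃ i j, p = (∑ k, X (i, j, k)) - 1} ∪
           {p | ∃ i j k, p = X (i, j, k) * (X (i, j, k) - 1)} ∪
           {p | ∃ i j k, p = X (i, j, k) - X (α i, β j, γ k)})) =
      Nat.card {L : Fin n → Fin n → Fin n // IsLatinSquare L ∧ IsAutotopism α β γ L} :=
  finrank_quotient_eq_card_latinSquares_autotopism_general ℚ n α β γ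
end

section
/- Let Θ = (α,β,γ) be an isotopism of order n and let L₁, L₂ be Latin squares of order n both having Θ as an autotopism. If L₁(i,j) = L₂(i,j) for all (i,j) ∈ S_Θ, then L₁ = L₂. In other words, a Latin square in LS(Θ) is completely determined by its entries on the set S_Θ. -/
/-- `i` is a cycle leader of `δ`, i.e. the minimum of its orbit under `δ`. -/
def IsCycleLeader {n : ℕ} (δ : Equiv.Perm (Fin n)) (i : Fin n) : Prop :=
  ∀ m : ℤ, i ≤ (δ ^ m) i

/-- The set `S_Θ` of multi-indices associated with the isotopism `Θ = (α, β, γ)`. -/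
def STheta {n : ℕ} (α β : Equiv.Perm (Fin n)) : Set (Fin n × Fin n) :=
  {p | IsCycleLeader α p.1 ∧ (α p.1 = p.1 → IsCycleLeader β p.2)}

/-!
By equivariance and injectivity of `γ`, two arrays with autotopism `(α, β, γ)` agree at `(i, j)`
if and only if they agree at `((α ^ m) i, (β ^ m) j)`, for any integer `m`. A suitable power moves
the row to a cycle leader of `α`. If that row is fixed by `α`, further powers move the column along
its `β`-cycle without changing the row.
-/

open Equiv Function

theorem rel_zpow_apply_iff {R C : Type*} {α : Perm R} {β : Perm C} {r : R → C → Prop}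
    (hr : ∀ i j, r (α i) (β j) ↔ r i j) (m : ℤ) (i : R) (j : C) :
    r ((α ^ m) i) ((β ^ m) j) ↔ r i j := by
  induction m using Int.induction_on generalizing i j with
  | zero => simp
  | succ k ih => rw [zpow_add_one, zpow_add_one, Perm.mul_apply, Perm.mul_apply, ih, hr]
  | pred k ih =>
    rw [zpow_sub_one, zpow_sub_one, Perm.mul_apply, Perm.mul_apply, ih, ← hr]
    simp only [Perm.inv_def, apply_symm_apply]

theorem exists_sameCycle_forall_le_zpow_apply {X : Type*} [LinearOrder X] [WellFoundedLT X]
    (σ : Perm X) (x : X) : ∃ y, (∀ m : ℤ, y ≤ (σ ^ m) y) ∧ σ.SameCycle x y := by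
  let orbit : ℤ → X := fun m => (σ ^ m) x
  refine ⟨orbit (argmin orbit), fun m => ?_, argmin orbit, rfl⟩
  calc
    orbit (argmin orbit) ≤ orbit (m + argmin orbit) := argmin_le orbit _
    _ = (σ ^ m) (orbit (argmin orbit)) := by simp only [orbit, zpow_add, Perm.mul_apply]

theorem latinSquare_autotopism_determined_by_STheta_general {R C S : Type*}
    {α : Perm R} {β : Perm C} {γ : S → S} {L₁ L₂ : R → C → S} {A : Set R} {B : Set C}
    (hγ : Injective γ)
    (ha₁ : ∀ i j, L₁ (α i) (β j) = γ (L₁ i j)) (ha₂ : ∀ i j, L₂ (α i) (β j) = γ (L₂ i j))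
    (hA : ∀ i, ∃ a ∈ A, α.SameCycle i a) (hB : ∀ j, ∃ b ∈ B, β.SameCycle j b)
    (h : ∀ i j, i ∈ A ∧ (α i = i → j ∈ B) → L₁ i j = L₂ i j) :
    L₁ = L₂ := by
  have agree_zpow_iff (m : ℤ) (i : R) (j : C) :
      L₁ ((α ^ m) i) ((β ^ m) j) = L₂ ((α ^ m) i) ((β ^ m) j) ↔ L₁ i j = L₂ i j :=
    rel_zpow_apply_iff (r := fun i j => L₁ i j = L₂ i j)
      (fun i j => by rw [ha₁, ha₂, hγ.eq_iff]) m i j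
  funext i j
  obtain ⟨_, hiA, m, rfl⟩ := hA i
  rw [← agree_zpow_iff m]
  by_cases hfix : IsFixedPt α ((α ^ m) i)
  · obtain ⟨_, hjB, k, rfl⟩ := hB ((β ^ m) j)
    rw [← agree_zpow_iff k, hfix.perm_zpow k]
    exact h _ _ ⟨hiA, fun _ => hjB⟩
  · exact h _ _ ⟨hiA, fun hi => absurd hi hfix⟩

theorem latinSquare_autotopism_determined_by_STheta
    (n : ℕ) (α β γ : Equiv.Perm (Fin n)) (L₁ L₂ : Fin n → Fin n → Fin n)
    (h₁ : IsLatinSquare L₁) (h₂ : IsLatinSquare L₂)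
    (ha₁ : IsAutotopism α β γ L₁) (ha₂ : IsAutotopism α β γ L₂)
    (h : ∀ i j, (i, j) ∈ STheta α β → L₁ i j = L₂ i j) :
    L₁ = L₂ :=
  latinSquare_autotopism_determined_by_STheta_general (A := {i | IsCycleLeader α i})
    (B := {j | IsCycleLeader β j}) γ.injective ha₁ ha₂
    (exists_sameCycle_forall_le_zpow_apply α) (exists_sameCycle_forall_le_zpow_apply β) h
end

section
/- Let Θ₁ = (α₁,β₁,γ₁) and Θ₂ = (α₂,β₂,γ₂) be isotopisms of order n such that α₁ and α₂ have the same cycle type, β₁ and β₂ have the same cycle type, and γ₁ and γ₂ have the same cycle type. Then Δ(Θ₁) = Δ(Θ₂), i.e., the number of Latin squares of order n having Θ₁ as an autotopism equals the number of Latin squares of order n having Θ₂ as an autotopism. -/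
/-- `Δ(Θ)`: the number of Latin squares of order `n` admitting `(α, β, γ)` as autotopism. -/
noncomputable def Delta {n : ℕ} (α β γ : Equiv.Perm (Fin n)) : ℕ :=
  Nat.card {L : Fin n → Fin n → Fin n // IsLatinSquare L ∧ IsAutotopism α β γ L}

/-- The table isotopic to `L` under `(a, b, c)`: row `i` moves to row `a i`, column `j` to column
`b j`, and the symbol `k` is renamed `c k`. It is bundled as an equivalence on all tables, Latin or
not, so that it can be restricted to any class of tables it preserves. -/
def isotope {X Y Z X' Y' Z' : Type*} (a : X ≃ X') (b : Y ≃ Y') (c : Z ≃ Z') :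
    (X → Y → Z) ≃ (X' → Y' → Z') :=
  a.arrowCongr (b.arrowCongr c)

theorem isotope_apply_apply {X Y Z X' Y' Z' : Type*} (a : X ≃ X') (b : Y ≃ Y') (c : Z ≃ Z')
    (L : X → Y → Z) (i : X) (j : Y) : isotope a b c L (a i) (b j) = c (L i j) := by
  simp [isotope]

section Isotope

variable {n : ℕ} (a b c : Equiv.Perm (Fin n)) {α β γ : Equiv.Perm (Fin n)}
  {L : Fin n → Fin n → Fin n}

theorem isLatinSquare_isotope_iff : IsLatinSquare (isotope a b c L) ↔ IsLatinSquare L := by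
  have row_iff (i : Fin n) :
      Function.Bijective (L i) ↔ Function.Bijective (isotope a b c L (a i)) := by
    rw [← Equiv.comp_bijective (L i) c, ← Equiv.bijective_comp b (isotope a b c L (a i))]
    simp only [Function.comp_def, isotope_apply_apply]
  have column_iff (j : Fin n) :
      (Function.Bijective fun i => L i j) ↔
        Function.Bijective fun i => isotope a b c L i (b j) := by
    rw [← Equiv.comp_bijective _ c, ← Equiv.bijective_comp a fun i => isotope a b c L i (b j)]
    simp only [Function.comp_def, isotope_apply_apply]
  exact (and_congr (a.forall_congr row_iff) (b.forall_congr column_iff)).symm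

theorem isAutotopism_conj_isotope_iff :
    IsAutotopism (a * α * a⁻¹) (b * β * b⁻¹) (c * γ * c⁻¹) (isotope a b c L) ↔
      IsAutotopism α β γ L := by
  have entry_iff (i j : Fin n) :
      L (α i) (β j) = γ (L i j) ↔
        isotope a b c L ((a * α * a⁻¹) (a i)) ((b * β * b⁻¹) (b j)) =
          (c * γ * c⁻¹) (isotope a b c L (a i) (b j)) := by
    simp only [Equiv.Perm.mul_apply, Equiv.Perm.inv_def, Equiv.symm_apply_apply,
      isotope_apply_apply, c.apply_eq_iff_eq]
  exact (Equiv.forall₂_congr a b (entry_iff _ _)).symm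

theorem delta_conj (α β γ : Equiv.Perm (Fin n)) :
    Delta (a * α * a⁻¹) (b * β * b⁻¹) (c * γ * c⁻¹) = Delta α β γ :=
  Eq.symm <| Nat.card_congr <| (isotope a b c).subtypeEquiv fun _ =>
    (and_congr (isLatinSquare_isotope_iff a b c) (isAutotopism_conj_isotope_iff a b c)).symm

end Isotope

theorem delta_eq_of_isConj {n : ℕ} {α₁ β₁ γ₁ α₂ β₂ γ₂ : Equiv.Perm (Fin n)}
    (hα : IsConj α₁ α₂) (hβ : IsConj β₁ β₂) (hγ : IsConj γ₁ γ₂) :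
    Delta α₁ β₁ γ₁ = Delta α₂ β₂ γ₂ := by
  obtain ⟨a, rfl⟩ := isConj_iff.1 hα
  obtain ⟨b, rfl⟩ := isConj_iff.1 hβ
  obtain ⟨c, rfl⟩ := isConj_iff.1 hγ
  exact (delta_conj a b c α₁ β₁ γ₁).symm

theorem delta_eq_of_same_cycleType (n : ℕ)
    (α₁ β₁ γ₁ α₂ β₂ γ₂ : Equiv.Perm (Fin n))
    (hα : α₁.cycleType = α₂.cycleType)
    (hβ : β₁.cycleType = β₂.cycleType)
    (hγ : γ₁.cycleType = γ₂.cycleType) :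
    Delta α₁ β₁ γ₁ = Delta α₂ β₂ γ₂ :=
  delta_eq_of_isConj (Equiv.Perm.isConj_of_cycleType_eq hα)
    (Equiv.Perm.isConj_of_cycleType_eq hβ) (Equiv.Perm.isConj_of_cycleType_eq hγ)
end

section
/- Let α, β, γ be permutations of {1,...,8} such that α and β are 8-cycles (cycle type {8}) and γ is a product of two disjoint 4-cycles (cycle type {4,4}). Then the number of Latin squares of order 8 having Θ = (α,β,γ) as an autotopism is 1152. -/
/-!
Relabel rows and columns by `ZMod 8` and symbols by `Fin 2 × ZMod 4`, so that `α` and `β` become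
`x ↦ x + 1` and `γ` becomes `(b, y) ↦ (b, y + 1)`. An autotopic square is then determined by its
column `c : ZMod 8 → Fin 2 × ZMod 4` at `0`, and it is Latin exactly when `c` and
`x ↦ ((c x).1, (c x).2 - x)` are bijective. The first coordinate of `c` splits `ZMod 8` into two
fibres; on each of them the second coordinate `f` must be a bijection onto `ZMod 4` such that
`f x - x` is again a bijection. This forces the fibre to have four elements whose sum is `0` modulo
`4`, and then there are exactly `8` such `f`. As `18` splittings are admissible, the count is
`18 * 8 * 8 = 1152`.
-/

open Function Equiv

section AutotopicSquares

variable {I J S I' J' S' : Type*}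

/-- The Latin squares with rows `I`, columns `J` and symbols `S` that admit `(α, β, γ)` as an
autotopism. Arbitrary index types allow the three permutations to be put in a normal form. -/
def autotopicSquares (α : I → I) (β : J → J) (γ : S → S) : Set (I → J → S) :=
  {L | ((∀ i, Bijective (L i)) ∧ ∀ j, Bijective fun i => L i j) ∧
    ∀ i j, L (α i) (β j) = γ (L i j)}

theorem relabel_mem_autotopicSquares_iff {α : I → I} {β : J → J} {γ : S → S}
    {α' : I' → I'} {β' : J' → J'} {γ' : S' → S'} {a : I ≃ I'} {b : J ≃ J'} {c : S ≃ S'}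
    (ha : Semiconj a α α') (hb : Semiconj b β β') (hc : Semiconj c γ γ') (L : I → J → S) :
    arrowCongr a (arrowCongr b c) L ∈ autotopicSquares α' β' γ' ↔
      L ∈ autotopicSquares α β γ := by
  have relabel (i j) : arrowCongr a (arrowCongr b c) L (a i) (b j) = c (L i j) := by simp
  refine and_congr (and_congr ?rows ?columns) ?autotopism
  case rows =>
    rw [← a.forall_congr_right]
    refine forall_congr' fun i => ?_
    rw [← Bijective.of_comp_iff _ b.bijective, ← Bijective.of_comp_iff' c.bijective (L i)]
    exact iff_of_eq (congrArg _ (funext (relabel i)))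
  case columns =>
    rw [← b.forall_congr_right]
    refine forall_congr' fun j => ?_
    rw [← Bijective.of_comp_iff _ a.bijective, ← Bijective.of_comp_iff' c.bijective fun i => L i j]
    exact iff_of_eq (congrArg _ (funext fun i => relabel i j))
  case autotopism =>
    simp only [← a.forall_congr_right, ← b.forall_congr_right, ← ha.eq, ← hb.eq, relabel, ← hc.eq,
      c.apply_eq_iff_eq]

theorem card_autotopicSquares_congr {α : I → I} {β : J → J} {γ : S → S}
    {α' : I' → I'} {β' : J' → J'} {γ' : S' → S'} {a : I ≃ I'} {b : J ≃ J'} {c : S ≃ S'}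
    (ha : Semiconj a α α') (hb : Semiconj b β β') (hc : Semiconj c γ γ') :
    Nat.card (autotopicSquares α β γ) = Nat.card (autotopicSquares α' β' γ') :=
  Nat.card_congr <| (arrowCongr a (arrowCongr b c)).subtypeEquiv fun L =>
    (relabel_mem_autotopicSquares_iff ha hb hc L).symm

end AutotopicSquares

section NormalForm

variable {n : ℕ}

theorem pow_val_one {M : Type*} [Monoid M] {x : M} (hx : x ^ n = 1) : x ^ (1 : ZMod n).val = x := by
  rw [ZMod.val_one_eq_one_mod, ← pow_eq_pow_mod _ hx, pow_one]

variable [NeZero n]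

theorem pow_val_add {M : Type*} [Monoid M] {x : M} (hx : x ^ n = 1) (a b : ZMod n) :
    x ^ (a + b).val = x ^ a.val * x ^ b.val := by
  rw [ZMod.val_add, ← pow_eq_pow_mod _ hx, pow_add]

/-- The normal form `(b, y) ↦ (b, y + 1)` of a permutation all of whose cycles have length `n`,
with one cycle for each `b : B`. -/
def parallelShift (B : Type*) (n : ℕ) : Perm (B × ZMod n) :=
  (Equiv.refl B).prodCongr (Equiv.addRight 1)

theorem parallelShift_pow_apply {B : Type*} {m : ℕ} (k : ℕ) (s : B × ZMod m) :
    (parallelShift B m ^ k) s = (s.1, s.2 + k) := by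
  induction k with
  | zero => simp
  | succ k ih => rw [pow_succ', Perm.mul_apply, ih, Nat.cast_succ, ← add_assoc]; rfl

theorem pow_eq_one_of_cycleType_eq_replicate {S : Type*} [Fintype S] [DecidableEq S]
    {γ : Perm S} {k n : ℕ} (hγ : γ.cycleType = Multiset.replicate k n) : γ ^ n = 1 := by
  refine orderOf_dvd_iff_pow_eq_one.mp ?_
  rw [← Perm.lcm_cycleType, hγ, Multiset.lcm_dvd]
  exact fun d hd => (Multiset.eq_of_mem_replicate hd).dvd

theorem exists_semiconj_parallelShift {S : Type*} [Fintype S] [DecidableEq S] {γ : Perm S}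
    {k : ℕ} (hγ : γ.cycleType = Multiset.replicate k n) (hS : Fintype.card S = k * n) :
    ∃ e : S ≃ Fin k × ZMod n, Semiconj e γ (parallelShift (Fin k) n) := by
  have hpow : γ ^ n = 1 := pow_eq_one_of_cycleType_eq_replicate hγ
  have hcycles : Fintype.card γ.cycleFactorsFinset = k := by
    simpa [Perm.cycleType_def] using congrArg Multiset.card hγ
  have hsupport : γ.support = Finset.univ := by
    rw [← Finset.card_eq_iff_eq_univ, ← Perm.sum_cycleType, hγ, hS, Multiset.sum_replicate,
      smul_eq_mul]
  let cycle : Fin k ≃ γ.cycleFactorsFinset := (Fintype.equivFinOfCardEq hcycles).symm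
  obtain ⟨basePoint⟩ := Perm.Basis.nonempty γ
  let point (s : Fin k × ZMod n) : S := (γ ^ s.2.val) (basePoint (cycle s.1))
  have point_surjective : Surjective point := fun x => by
    have hx : γ.cycleOf x ∈ γ.cycleFactorsFinset := by
      rw [Perm.cycleOf_mem_cycleFactorsFinset_iff, hsupport]
      exact Finset.mem_univ x
    obtain ⟨m, hm, hmx⟩ := (basePoint.sameCycle hx).exists_pow_eq'
    have hmn : m < n := hm.trans_le <| orderOf_le_of_pow_eq_one (NeZero.pos n) hpow
    refine ⟨(cycle.symm ⟨_, hx⟩, m), ?_⟩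
    simpa only [point, ZMod.val_natCast_of_lt hmn, apply_symm_apply] using hmx
  have point_bijective : Bijective point :=
    point_surjective.bijective_of_nat_card_le (by simp [hS])
  have point_semiconj : Semiconj point (parallelShift (Fin k) n) γ := fun s => by
    change (γ ^ (s.2 + 1).val) (basePoint (cycle s.1)) = γ (point s)
    rw [add_comm, pow_val_add hpow, pow_val_one hpow, Perm.mul_apply]
  let e := Equiv.ofBijective point point_bijective
  exact ⟨e.symm, point_semiconj.inverse_left e.left_inv e.right_inv⟩

theorem exists_semiconj_add_one {S : Type*} [Fintype S] [DecidableEq S] {γ : Perm S}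
    (hγ : γ.cycleType = {n}) (hS : Fintype.card S = n) :
    ∃ e : S ≃ ZMod n, Semiconj e γ (· + 1) := by
  obtain ⟨e, he⟩ := exists_semiconj_parallelShift (k := 1) hγ (by rw [hS, one_mul])
  exact ⟨e.trans (uniqueProd _ _), fun x => congrArg Prod.snd (he x)⟩

end NormalForm

section ColumnZero

variable {n : ℕ} {S : Type*} {γ : Perm S}

theorem bijective_column_iff (c : ZMod n → S) (j : ZMod n) :
    Bijective (fun i => (γ ^ j.val) (c (i - j))) ↔ Bijective c :=
  ((γ ^ j.val).bijective.of_comp_iff' _).trans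
    (Bijective.of_comp_iff c (Equiv.subRight j).bijective)

variable [NeZero n]

theorem eq_pow_apply_columnZero {L : ZMod n → ZMod n → S}
    (hL : ∀ i j, L (i + 1) (j + 1) = γ (L i j)) (i j : ZMod n) :
    L i j = (γ ^ j.val) (L (i - j) 0) := by
  have diagonal (m : ℕ) (i : ZMod n) : L (i + m) m = (γ ^ m) (L i 0) := by
    induction m with
    | zero => simp
    | succ m ih => rw [Nat.cast_succ, ← add_assoc, hL, ih, pow_succ', Perm.mul_apply]
  simpa using diagonal j.val (i - j)

theorem pow_val_apply_sub (hγ : γ ^ n = 1) (c : ZMod n → S) (i j : ZMod n) :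
    (γ ^ j.val) (c (i - j)) = (γ ^ i.val) ((γ ^ (i - j).val)⁻¹ (c (i - j))) := by
  have hsplit : γ ^ i.val = γ ^ j.val * γ ^ (i - j).val := by
    rw [← pow_val_add hγ, add_sub_cancel]
  simp [hsplit]

theorem bijective_row_iff (hγ : γ ^ n = 1) (c : ZMod n → S) (i : ZMod n) :
    Bijective (fun j => (γ ^ j.val) (c (i - j))) ↔
      Bijective fun k : ZMod n => (γ ^ k.val)⁻¹ (c k) := by
  simp only [pow_val_apply_sub hγ c i]
  exact ((γ ^ i.val).bijective.of_comp_iff' _).trans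
    (Bijective.of_comp_iff (fun k : ZMod n => (γ ^ k.val)⁻¹ (c k)) (Equiv.subLeft i).bijective)

/-- An autotopic square of `(x ↦ x + 1, x ↦ x + 1, γ)` is encoded by its column at `0`. -/
def autotopicSquaresEquivColumnZero (hγ : γ ^ n = 1) :
    autotopicSquares (fun x : ZMod n => x + 1) (fun x : ZMod n => x + 1) γ ≃
      {c : ZMod n → S // Bijective c ∧ Bijective fun k : ZMod n => (γ ^ k.val)⁻¹ (c k)} where
  toFun L := ⟨fun i => L.1 i 0, by
    obtain ⟨L, ⟨hrow, hcol⟩, hL⟩ := L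
    refine ⟨hcol 0, (bijective_row_iff hγ _ 0).mp ?_⟩
    simpa only [← eq_pow_apply_columnZero hL] using hrow 0⟩
  invFun c := ⟨fun i j => (γ ^ j.val) (c.1 (i - j)),
    ⟨fun i => (bijective_row_iff hγ c.1 i).mpr c.2.2,
      fun j => (bijective_column_iff c.1 j).mpr c.2.1⟩,
    fun i j => by
      change (γ ^ (j + 1).val) (c.1 (i + 1 - (j + 1))) = γ ((γ ^ j.val) (c.1 (i - j)))
      rw [add_sub_add_right_eq_sub, add_comm j 1, pow_val_add hγ, pow_val_one hγ, Perm.mul_apply]⟩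
  left_inv L := Subtype.ext <| funext₂ fun i j => (eq_pow_apply_columnZero L.2.2 i j).symm
  right_inv c := Subtype.ext <| funext fun i => by simp

end ColumnZero

section Fibers

variable {X B H : Type*}

theorem bijective_prodMk_iff (χ : X → B) (f : X → H) :
    Bijective (fun x => (χ x, f x)) ↔ ∀ b, Bijective fun x : {x // χ x = b} => f x := by
  simp only [bijective_iff_existsUnique, Prod.forall, Prod.mk.injEq]
  refine forall₂_congr fun b h => ⟨?_, ?_⟩
  · rintro ⟨x, ⟨hb, hx⟩, unique⟩
    exact ⟨⟨x, hb⟩, hx, fun y hy => Subtype.ext (unique y ⟨y.2, hy⟩)⟩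
  · rintro ⟨⟨x, hb⟩, hx, unique⟩
    exact ⟨x, ⟨hb, hx⟩, fun y hy => congrArg Subtype.val (unique ⟨y, hy.1⟩ hy.2)⟩

/-- A function on `X` is the same as a family of functions on the fibres of `χ`. -/
def arrowEquivPiFiber (χ : X → B) : (X → H) ≃ ∀ b, {x // χ x = b} → H :=
  ((sigmaFiberEquiv χ).arrowCongr (Equiv.refl H)).symm.trans (piCurry fun _ _ => H)

end Fibers

section Orthomorphisms

variable {X Y B H : Type*} [AddGroup H]

/-- `f` and `f - π` are bijections onto `H`. For `π = id` these `f` are the orthomorphisms of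
`H`. -/
def IsOrthomorphismAlong (π f : X → H) : Prop :=
  Bijective f ∧ Bijective fun x => f x - π x

/-- The number of orthomorphisms along `π`. -/
noncomputable def orthomorphismCount (π : X → H) : ℕ :=
  Nat.card {f : X → H // IsOrthomorphismAlong π f}

theorem orthomorphismCount_comp_equiv (e : Y ≃ X) (π : X → H) :
    orthomorphismCount (π ∘ e) = orthomorphismCount π :=
  (Nat.card_congr <| (e.arrowCongr (Equiv.refl H)).symm.subtypeEquiv fun f => and_congr
    (Bijective.of_comp_iff f e.bijective).symm
    (Bijective.of_comp_iff (fun x => f x - π x) e.bijective).symm).symm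

theorem card_bijective_and_bijective_shear [Fintype X] [Fintype B] [DecidableEq X] [Finite H]
    (π : X → H) :
    Nat.card {c : X → B × H //
        Bijective c ∧ Bijective fun x => ((c x).1, (c x).2 - π x)} =
      ∑ χ : X → B, ∏ b, orthomorphismCount fun x : {x // χ x = b} => π x := by
  let IsPair (χ : X → B) (f : X → H) : Prop :=
    Bijective (fun x => (χ x, f x)) ∧ Bijective fun x => (χ x, f x - π x)
  have fiberwise (χ : X → B) (f : X → H) : IsPair χ f ↔
      ∀ b, IsOrthomorphismAlong (fun x : {x // χ x = b} => π x) (arrowEquivPiFiber χ f b) := by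
    simp only [IsPair, bijective_prodMk_iff, ← forall_and]
    rfl
  calc
    _ = Nat.card (Σ χ, {f // IsPair χ f}) := Nat.card_congr <|
      ((arrowProdEquivProdArrow X _ _).subtypeEquiv fun _ => Iff.rfl).trans
        (subtypeProdEquivSigmaSubtype IsPair)
    _ = ∑ χ, Nat.card {f // IsPair χ f} := Nat.card_sigma
    _ = _ := Finset.sum_congr rfl fun χ _ =>
      (Nat.card_congr <| ((arrowEquivPiFiber χ).subtypeEquiv (fiberwise χ)).trans
        subtypePiEquivPi).trans Nat.card_pi

end Orthomorphisms

section AbelianOrthomorphisms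

variable {X H : Type*} [AddCommGroup H]

theorem IsOrthomorphismAlong.sum_eq_zero [Fintype X] [Finite H] {π f : X → H}
    (hf : IsOrthomorphismAlong π f) : ∑ x, π x = 0 := by
  have := Fintype.ofFinite H
  have hsum : ∑ x, f x = ∑ x, (f x - π x) :=
    (hf.1.sum_comp id).trans (hf.2.sum_comp id).symm
  rwa [Finset.sum_sub_distrib, eq_comm, sub_eq_self] at hsum

theorem orthomorphismCount_eq_zero [Fintype X] [Fintype H] {π : X → H}
    (hπ : ¬(Fintype.card X = Fintype.card H ∧ ∑ x, π x = 0)) : orthomorphismCount π = 0 := by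
  have : IsEmpty {f : X → H // IsOrthomorphismAlong π f} :=
    ⟨fun f => hπ ⟨Fintype.card_of_bijective f.2.1, f.2.sum_eq_zero⟩⟩
  exact Nat.card_of_isEmpty

end AbelianOrthomorphisms

theorem card_autotopicSquares_parallelShift {n m : ℕ} [NeZero n] (hmn : m ∣ n)
    (B : Type*) [Fintype B] :
    Nat.card (autotopicSquares (fun x : ZMod n => x + 1) (fun x : ZMod n => x + 1)
        (parallelShift B m)) =
      ∑ χ : ZMod n → B, ∏ b, orthomorphismCount fun x : {x // χ x = b} => (x.1.val : ZMod m) := by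
  have : NeZero m := ⟨ne_zero_of_dvd_ne_zero (NeZero.ne n) hmn⟩
  have hpow : parallelShift B m ^ n = 1 := Equiv.ext fun s => by
    simp [parallelShift_pow_apply, (ZMod.natCast_eq_zero_iff n m).mpr hmn]
  have hinv (k : ℕ) (s : B × ZMod m) : (parallelShift B m ^ k)⁻¹ s = (s.1, s.2 - k) := by
    rw [Perm.inv_eq_iff_eq, parallelShift_pow_apply, sub_add_cancel]
  rw [Nat.card_congr (autotopicSquaresEquivColumnZero hpow)]
  simp only [hinv]
  exact card_bijective_and_bijective_shear _

section OrderEight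

-- Up to reindexing and translation, `π` is `(0, 0, 2, 2)` or `(0, 0, 1, 3)`.
theorem orthomorphismCount_fin_four : ∀ π : Fin 4 → ZMod 4, ∑ i, π i = 0 → (∀ h, ∃ i, π i ≠ h) →
    orthomorphismCount π = 8 := by
  simp only [orthomorphismCount, IsOrthomorphismAlong, Nat.card_eq_fintype_card]
  decide +kernel

theorem orthomorphismCount_zmod_four {X : Type*} [Fintype X] {π : X → ZMod 4}
    (hX : Fintype.card X = 4) (hsum : ∑ x, π x = 0) (hπ : ∀ h, ∃ x, π x ≠ h) :
    orthomorphismCount π = 8 := by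
  let e : Fin 4 ≃ X := (Fintype.equivFinOfCardEq hX).symm
  rw [← orthomorphismCount_comp_equiv e]
  exact orthomorphismCount_fin_four (π ∘ e) ((e.sum_comp π).trans hsum)
    fun h => (e.exists_congr_right (q := fun x => π x ≠ h)).mpr (hπ h)

/-- The condition on a splitting of the rows into fibres under which every fibre carries an
orthomorphism along reduction modulo `4`. -/
abbrev IsAdmissible {B : Type*} [DecidableEq B] (χ : ZMod 8 → B) : Prop :=
  ∀ b, Fintype.card {x // χ x = b} = 4 ∧ ∑ x : {x // χ x = b}, (x.1.val : ZMod 4) = 0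

theorem card_isAdmissible : Fintype.card {χ : ZMod 8 → Fin 2 // IsAdmissible χ} = 18 := by
  decide +kernel

theorem exists_val_ne_of_card_fiber {B : Type*} [DecidableEq B] {χ : ZMod 8 → B} {b : B}
    (hχ : Fintype.card {x // χ x = b} = 4) (h : ZMod 4) :
    ∃ x : {x // χ x = b}, (x.1.val : ZMod 4) ≠ h := by
  by_contra! hconst
  have hclass : ∀ h : ZMod 4, Fintype.card {x : ZMod 8 // (x.val : ZMod 4) = h} = 2 := by decide
  have hle := Fintype.card_subtype_mono (χ · = b) (fun x : ZMod 8 => (x.val : ZMod 4) = h)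
    fun x hx => hconst ⟨x, hx⟩
  rw [hχ, hclass] at hle
  omega

theorem orthomorphismCount_fiber {B : Type*} [DecidableEq B] (χ : ZMod 8 → B) (b : B) :
    orthomorphismCount (fun x : {x // χ x = b} => (x.1.val : ZMod 4)) =
      if Fintype.card {x // χ x = b} = 4 ∧ ∑ x : {x // χ x = b}, (x.1.val : ZMod 4) = 0
        then 8 else 0 := by
  split_ifs with hb
  · exact orthomorphismCount_zmod_four hb.1 hb.2 (exists_val_ne_of_card_fiber hb.1)
  · exact orthomorphismCount_eq_zero hb

theorem sum_prod_orthomorphismCount_fiber (B : Type*) [Fintype B] [DecidableEq B] :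
    ∑ χ : ZMod 8 → B, ∏ b, orthomorphismCount (fun x : {x // χ x = b} => (x.1.val : ZMod 4)) =
      Fintype.card {χ : ZMod 8 → B // IsAdmissible χ} * 8 ^ Fintype.card B := by
  simp only [orthomorphismCount_fiber, Fintype.prod_ite_zero, Finset.prod_const, Finset.card_univ]
  rw [← Finset.sum_filter, Finset.sum_const, smul_eq_mul, Fintype.card_subtype]

end OrderEight

theorem delta_88_44 (α β γ : Equiv.Perm (Fin 8))
    (hα : α.cycleType = {8}) (hβ : β.cycleType = {8}) (hγ : γ.cycleType = {4, 4}) :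
    Nat.card {L : Fin 8 → Fin 8 → Fin 8 // IsLatinSquare L ∧ IsAutotopism α β γ L} =
      1152 := by
  obtain ⟨a, ha⟩ := exists_semiconj_add_one hα (Fintype.card_fin 8)
  obtain ⟨b, hb⟩ := exists_semiconj_add_one hβ (Fintype.card_fin 8)
  obtain ⟨c, hc⟩ := exists_semiconj_parallelShift (k := 2) hγ (Fintype.card_fin 8)
  calc
    Nat.card (autotopicSquares α β γ) = Nat.card (autotopicSquares (· + 1) (· + 1) _) :=
      card_autotopicSquares_congr ha hb hc
    _ = ∑ χ : ZMod 8 → Fin 2, ∏ b,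
          orthomorphismCount (fun x : {x // χ x = b} => (x.1.val : ZMod 4)) :=
      card_autotopicSquares_parallelShift (by decide) (Fin 2)
    _ = Fintype.card {χ : ZMod 8 → Fin 2 // IsAdmissible χ} * 8 ^ Fintype.card (Fin 2) :=
      sum_prod_orthomorphismCount_fiber (Fin 2)
    _ = 1152 := by simp only [card_isAdmissible, Fintype.card_fin, Nat.reducePow, Nat.reduceMul]
end

section
/- Let α, β, γ be permutations of {1,...,8} such that α and β are 8-cycles (cycle type {8}) and γ has cycle type {2,2,4} (two disjoint 2-cycles and one 4-cycle, no fixed points... specifically two fixed-point-free 2-cycles and one 4-cycle, i.e., cycle structure with two 2-cycles and one 4-cycle and no fixed points). Then the number of Latin squares of order 8 having Θ = (α,β,γ) as an autotopism is 1408. -/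
/-!
After relabelling, `α` and `β` are the rotation `x ↦ x + 1` of `ℤ/8`, and a cycle of `γ` of length
`m` is the rotation `x ↦ x + 1` of `ℤ/m`. A square `L` with this autotopism is determined by its row
`f` at `0`, via `L i j = γ ^ i (f (j - i))`. Thus the symbols on a diagonal `j - i = d` run through
a single cycle of `γ`. Let `D` be the set of diagonals given to a cycle of length `m`. The rows and
columns of `L` are bijections exactly when, for each cycle, both `f` and `d ↦ f d - d` map `D`
bijectively onto `ℤ/m`. Subtracting the sums over these two bijections shows that `D` has sum zero
modulo `m`. Conversely, every `D` with `m` elements and sum zero admits `2`, `2` or `8` choices of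
`f`, for the cycles of length `2`, `2` and `4` respectively. As `44` distributions of the diagonals
among the cycles have zero sums, the number of squares is `44 * (2 * 2 * 8) = 1408`.
-/

open Function

section EquivariantLatinSquare

variable {G S : Type*} [AddGroup G] [AddAction G S]

/-- A Latin square with rows and columns indexed by a group `G` and symbols in a `G`-set `S`, for
which every `g : G`, translating rows and columns and acting on symbols, is an autotopism. -/
structure IsEquivariantLatinSquare (L : G → G → S) : Prop where
  row_bijective : ∀ i, Bijective (L i)
  column_bijective : ∀ j, Bijective fun i => L i j
  map_add_add : ∀ g i j, L (g + i) (g + j) = g +ᵥ L i j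

/-- Both `f` and its twist by `-t` are bijections onto the `G`-set `S`. With `t = id` this says
that `f` is the row at `0` of an equivariant Latin square: the entry at `(-g, 0)` is then
`-g +ᵥ f g`. -/
structure IsTwistedBijection {ι : Type*} (t : ι → G) (f : ι → S) : Prop where
  bijective : Bijective f
  twist_bijective : Bijective fun i => -t i +ᵥ f i

lemma isTwistedBijection_iff {ι : Type*} {t : ι → G} {f : ι → S} :
    IsTwistedBijection t f ↔ Bijective f ∧ Bijective fun i => -t i +ᵥ f i :=
  ⟨fun h => ⟨h.1, h.2⟩, fun h => ⟨h.1, h.2⟩⟩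

lemma IsEquivariantLatinSquare.apply_eq_vadd {L : G → G → S} (h : IsEquivariantLatinSquare L)
    (i j : G) : L i j = i +ᵥ L 0 (-i + j) := by
  simpa using h.map_add_add i 0 (-i + j)

lemma IsEquivariantLatinSquare.isTwistedBijection {L : G → G → S}
    (h : IsEquivariantLatinSquare L) : IsTwistedBijection id (L 0) where
  bijective := h.row_bijective 0
  twist_bijective := by
    have column : (fun g => -g +ᵥ L 0 g) = (fun i => L i 0) ∘ Equiv.neg G := by
      funext g
      simp [h.apply_eq_vadd (-g) 0]
    exact column ▸ (h.column_bijective 0).comp (Equiv.bijective _)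

lemma IsTwistedBijection.isEquivariantLatinSquare {f : G → S} (h : IsTwistedBijection id f) :
    IsEquivariantLatinSquare fun i j => i +ᵥ f (-i + j) where
  row_bijective i :=
    (AddAction.bijective i).comp (h.bijective.comp (Equiv.addLeft (-i)).bijective)
  column_bijective j := by
    have column : (fun i => i +ᵥ f (-i + j)) =
        (j +ᵥ ·) ∘ (fun g => -g +ᵥ f g) ∘ (Equiv.neg G).trans (Equiv.addRight j) := by
      funext i
      simp [vadd_vadd]
    exact column ▸
      (AddAction.bijective j).comp (h.twist_bijective.comp (Equiv.bijective _))
  map_add_add g i j := by simp [add_assoc, add_vadd]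

lemma card_isEquivariantLatinSquare :
    Nat.card {L : G → G → S // IsEquivariantLatinSquare L} =
      Nat.card {f : G → S // IsTwistedBijection id f} :=
  Nat.card_congr
    { toFun L := ⟨L.1 0, L.2.isTwistedBijection⟩
      invFun f := ⟨_, f.2.isEquivariantLatinSquare⟩
      left_inv L := Subtype.ext <| funext₂ fun i j => (L.2.apply_eq_vadd i j).symm
      right_inv f := Subtype.ext <| funext fun j => by simp }

end EquivariantLatinSquare

lemma exists_equiv_semiconj_of_cycleType_eq {X Y : Type*} [Fintype X] [DecidableEq X] [Fintype Y]
    [DecidableEq Y] {σ : Equiv.Perm X} {τ : Equiv.Perm Y} (h : σ.cycleType = τ.cycleType)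
    (hcard : Fintype.card X = Fintype.card Y) : ∃ e : X ≃ Y, Semiconj e σ τ := by
  let e : X ≃ Y := Fintype.equivOfCardEq hcard
  let f : Y ≃ {_x : X // True} := e.symm.trans (Equiv.subtypeUnivEquiv fun _ => trivial).symm
  have conj : IsConj σ (τ.extendDomain f) :=
    Equiv.Perm.isConj_iff_cycleType_eq.2 (h.trans (Equiv.Perm.cycleType_extendDomain f).symm)
  obtain ⟨u, hu⟩ := isConj_iff.1 conj
  refine ⟨u.trans e, fun x => ?_⟩
  have hux : u (σ x) = τ.extendDomain f (u x) := by simp [← hu]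
  rw [Equiv.trans_apply, hux, Equiv.Perm.extendDomain_apply_subtype τ f trivial]
  simp [f]

lemma cycleType_addLeft_one (n : ℕ) :
    (Equiv.addLeft (1 : ZMod (n + 2))).cycleType = {n + 2} := by
  have h : Equiv.addLeft (1 : ZMod (n + 2)) = finRotate (n + 2) :=
    Equiv.ext fun i => (add_comm 1 i).trans (finRotate_apply i).symm
  exact (congrArg Equiv.Perm.cycleType h).trans cycleType_finRotate

section ModelTransport

variable {n : ℕ} [NeZero n] {S : Type*} [AddAction (ZMod n) S]

lemma map_add_add_of_map_one_add {L : ZMod n → ZMod n → S}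
    (h : ∀ i j, L (1 + i) (1 + j) = (1 : ZMod n) +ᵥ L i j) (g i j : ZMod n) :
    L (g + i) (g + j) = g +ᵥ L i j := by
  obtain ⟨k, rfl⟩ := ZMod.natCast_zmod_surjective g
  induction k with
  | zero => simp
  | succ k ih => rw [Nat.cast_succ, add_comm (k : ZMod n), add_assoc, add_assoc, h, ih, add_vadd]

lemma isEquivariantLatinSquare_arrowCongr_iff {α β γ : Equiv.Perm (Fin n)} {u v : Fin n ≃ ZMod n}
    {w : Fin n ≃ S} (hu : Semiconj u α (1 + ·)) (hv : Semiconj v β (1 + ·))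
    (hw : Semiconj w γ ((1 : ZMod n) +ᵥ ·)) (L : Fin n → Fin n → Fin n) :
    IsEquivariantLatinSquare (u.arrowCongr (v.arrowCongr w) L) ↔
      IsLatinSquare L ∧ IsAutotopism α β γ L := by
  set M := u.arrowCongr (v.arrowCongr w) L
  have row (i) : Bijective (M (u i)) ↔ Bijective (L i) := by
    have : M (u i) = w ∘ L i ∘ v.symm := by ext; simp [M]
    rw [this, Equiv.comp_bijective, Equiv.bijective_comp]
  have column (j) : (Bijective fun i => M i (v j)) ↔ Bijective fun i => L i j := by
    have : (fun i => M i (v j)) = w ∘ (fun i => L i j) ∘ u.symm := by ext; simp [M]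
    rw [this, Equiv.comp_bijective, Equiv.bijective_comp]
  have shift (i j) : M (1 + u i) (1 + v j) = (1 : ZMod n) +ᵥ M (u i) (v j) ↔
      L (α i) (β j) = γ (L i j) := by
    rw [← hu.eq i, ← hv.eq j]
    simp [M, ← hw.eq]
  constructor
  · intro h
    exact ⟨⟨fun i => (row i).1 (h.row_bijective _), fun j => (column j).1 (h.column_bijective _)⟩,
      fun i j => (shift i j).1 (h.map_add_add _ _ _)⟩
  · rintro ⟨⟨hrow, hcolumn⟩, hshift⟩
    refine ⟨u.surjective.forall.2 fun i => (row i).2 (hrow i),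
      v.surjective.forall.2 fun j => (column j).2 (hcolumn j), map_add_add_of_map_one_add ?_⟩
    exact u.surjective.forall.2 fun i => v.surjective.forall.2 fun j => (shift i j).2 (hshift i j)

end ModelTransport

section SigmaFiber

variable {ι G K : Type*} {B : K → Type*}

lemma bijective_sigma_iff_forall_fiber (c : ι → K) (h : ∀ k, {i // c i = k} → B k) :
    (Bijective fun i => (⟨c i, h (c i) ⟨i, rfl⟩⟩ : Σ k, B k)) ↔ ∀ k, Bijective (h k) := by
  have factor : (fun i => (⟨c i, h (c i) ⟨i, rfl⟩⟩ : Σ k, B k)) =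
      Sigma.map id h ∘ (Equiv.sigmaFiberEquiv c).symm := rfl
  rw [factor, Equiv.bijective_comp]
  refine ⟨fun H k => ⟨H.1.of_sigma_map k, fun b => ?_⟩, fun H => ⟨?_, ?_⟩⟩
  · obtain ⟨⟨k', i⟩, hi⟩ := H.2 ⟨k, b⟩
    obtain ⟨rfl, hb⟩ := Sigma.mk.inj hi
    exact ⟨i, eq_of_heq hb⟩
  · exact injective_id.sigma_map fun k => (H k).1
  · exact surjective_id.sigma_map fun k => (H k).2

variable [AddGroup G] [∀ k, AddAction G (B k)]

lemma isTwistedBijection_sigma_iff (t : ι → G) (c : ι → K) (h : ∀ k, {i // c i = k} → B k) :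
    IsTwistedBijection t (fun i => (⟨c i, h (c i) ⟨i, rfl⟩⟩ : Σ k, B k)) ↔
      ∀ k, IsTwistedBijection (fun i : {i // c i = k} => t i) (h k) := by
  simp only [isTwistedBijection_iff, forall_and, ← bijective_sigma_iff_forall_fiber]
  rfl

lemma card_isTwistedBijection_sigma [Fintype (ι → K)] [Fintype K] [Finite ι] [∀ k, Finite (B k)]
    (t : ι → G) :
    Nat.card {f : ι → Σ k, B k // IsTwistedBijection t f} =
      ∑ c : ι → K, ∏ k, Nat.card {h : {i // c i = k} → B k //
        IsTwistedBijection (fun i : {i // c i = k} => t i) h} := by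
  simp only [← Nat.card_pi]
  rw [← Nat.card_sigma]
  let fiberMap (f : ι → Σ k, B k) (k : K) (i : {i // (f i).1 = k}) : B k := i.2 ▸ (f i).2
  exact Nat.card_congr
    { toFun f := ⟨fun i => (f.1 i).1, fun k =>
        ⟨fiberMap f.1 k, (isTwistedBijection_sigma_iff t _ (fiberMap f.1)).1 f.2 k⟩⟩
      invFun x := ⟨fun i => ⟨x.1 i, (x.2 (x.1 i)).1 ⟨i, rfl⟩⟩,
        (isTwistedBijection_sigma_iff t x.1 fun k => (x.2 k).1).2 fun k => (x.2 k).2⟩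
      left_inv _ := rfl
      right_inv x := Sigma.ext rfl <| heq_of_eq <| funext fun _ => Subtype.ext <|
        funext fun ⟨_, hi⟩ => by cases hi; rfl }

end SigmaFiber

lemma card_isTwistedBijection_comp_equiv {ι κ G S : Type*} [AddGroup G] [AddAction G S]
    (t : ι → G) (e : κ ≃ ι) :
    Nat.card {f : κ → S // IsTwistedBijection (fun i => t (e i)) f} =
      Nat.card {f : ι → S // IsTwistedBijection t f} := by
  refine (Nat.card_congr <| (e.symm.arrowCongr (Equiv.refl S)).subtypeEquiv fun f => ?_).symm
  rw [isTwistedBijection_iff, isTwistedBijection_iff, ← e.bijective_comp,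
    ← e.bijective_comp fun i => -t i +ᵥ f i]
  rfl

lemma sum_eq_zero_of_bijective_neg_add {ι A : Type*} [AddCommGroup A] [Fintype ι] {t h : ι → A}
    (hh : Bijective h) (hth : Bijective fun i => -t i + h i) : ∑ i, t i = 0 := by
  have : Fintype A := Fintype.ofBijective h hh
  have sums_eq : ∑ i, (-t i + h i) = ∑ i, h i :=
    (hth.sum_comp id).trans (hh.sum_comp id).symm
  simpa [Finset.sum_add_distrib] using sums_eq

/-- The lengths of the cycles of `γ`, indexed so that its two transpositions are distinguished. -/
def cycleLength : Fin 3 → ℕ := ![2, 2, 4]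

instance (k : Fin 3) : NeZero (cycleLength k) := ⟨by revert k; decide⟩

lemma cycleLength_dvd (k : Fin 3) : cycleLength k ∣ 8 := by
  revert k; decide

instance (k : Fin 3) : AddAction (ZMod 8) (ZMod (cycleLength k)) :=
  AddAction.compHom _ (ZMod.castHom (cycleLength_dvd k) (ZMod (cycleLength k))).toAddMonoidHom

lemma neg_vadd_eq_neg_cast_add {k : Fin 3} (g : ZMod 8) (x : ZMod (cycleLength k)) :
    -g +ᵥ x = -g.cast + x :=
  congrArg (· + x) (ZMod.cast_neg (cycleLength_dvd k) g)

lemma cycleType_toPerm_one_sigma :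
    (AddAction.toPerm (1 : ZMod 8) : Equiv.Perm (Σ k, ZMod (cycleLength k))).cycleType =
      {2, 2, 4} := by
  decide +kernel

/-- `c` assigns to each diagonal `{(i, i + d)}` of the square the cycle of `γ` that its symbols
run through; each cycle gets as many diagonals as its length `m`, and their sum vanishes modulo
`m`. -/
def IsZeroSumAssignment (c : ZMod 8 → Fin 3) : Prop :=
  ∀ k, Finset.card {d | c d = k} = cycleLength k ∧
    ∑ d with c d = k, (d.cast : ZMod (cycleLength k)) = 0

instance : DecidablePred IsZeroSumAssignment := fun _ => inferInstanceAs (Decidable (∀ _, _))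

lemma card_isZeroSumAssignment : Finset.card {c | IsZeroSumAssignment c} = 44 := by
  decide +kernel

-- Four equal residues modulo `4` would admit `24` bijections, but a residue occurs at most twice in
-- `ZMod 8`.
lemma card_isTwistedBijection_cycle_of_sum_eq_zero : ∀ (k : Fin 3) (D : Finset (ZMod 8)),
    D.card = cycleLength k → ∑ d ∈ D, (d.cast : ZMod (cycleLength k)) = 0 →
      Nat.card {h : D → ZMod (cycleLength k) // IsTwistedBijection (fun d => d.1) h} =
        ![2, 2, 8] k := by
  simp only [isTwistedBijection_iff, Nat.card_eq_fintype_card]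
  decide +kernel

lemma card_isTwistedBijection_cycle (k : Fin 3) (D : Finset (ZMod 8)) :
    Nat.card {h : D → ZMod (cycleLength k) // IsTwistedBijection (fun d => d.1) h} =
      if D.card = cycleLength k ∧ ∑ d ∈ D, (d.cast : ZMod (cycleLength k)) = 0 then
        ![2, 2, 8] k else 0 := by
  split_ifs with hD
  · exact card_isTwistedBijection_cycle_of_sum_eq_zero k D hD.1 hD.2
  · refine @Nat.card_of_isEmpty _ ⟨fun ⟨h, hbij, htwist⟩ => hD ⟨?_, ?_⟩⟩
    · simpa using Nat.card_eq_of_bijective h hbij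
    · rw [← D.sum_coe_sort]
      simp only [neg_vadd_eq_neg_cast_add] at htwist
      exact sum_eq_zero_of_bijective_neg_add hbij htwist

lemma prod_card_isTwistedBijection_fiber (c : ZMod 8 → Fin 3) :
    ∏ k, Nat.card {h : {d // c d = k} → ZMod (cycleLength k) //
      IsTwistedBijection (fun d => d.1) h} = if IsZeroSumAssignment c then 32 else 0 := by
  have fiber (k : Fin 3) :
      Nat.card {h : {d // c d = k} → ZMod (cycleLength k) //
        IsTwistedBijection (fun d => d.1) h} = _ :=
    card_isTwistedBijection_comp_equiv (fun d : ({d | c d = k} : Finset (ZMod 8)) => d.1)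
      (Equiv.subtypeEquivRight fun d => by simp)
  simp only [fiber, card_isTwistedBijection_cycle]
  rw [Fintype.prod_ite_zero]
  congr 1

lemma card_isTwistedBijection_id :
    Nat.card {f : ZMod 8 → Σ k, ZMod (cycleLength k) //
      IsTwistedBijection (G := ZMod 8) id f} = 1408 := by
  calc
    _ = ∑ c, if IsZeroSumAssignment c then 32 else 0 := by
      simp only [card_isTwistedBijection_sigma, id, prod_card_isTwistedBijection_fiber]
    _ = 44 * 32 := by
      rw [← Finset.sum_filter, Finset.sum_const, card_isZeroSumAssignment, smul_eq_mul]
    _ = 1408 := by norm_num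

theorem delta_88_224 (α β γ : Equiv.Perm (Fin 8))
    (hα : α.cycleType = {8}) (hβ : β.cycleType = {8}) (hγ : γ.cycleType = {2, 2, 4}) :
    Nat.card {L : Fin 8 → Fin 8 → Fin 8 // IsLatinSquare L ∧ IsAutotopism α β γ L} =
      1408 := by
  have rotation : (Equiv.addLeft (1 : ZMod 8)).cycleType = {8} := cycleType_addLeft_one 6
  obtain ⟨u, hu⟩ := exists_equiv_semiconj_of_cycleType_eq (hα.trans rotation.symm) rfl
  obtain ⟨v, hv⟩ := exists_equiv_semiconj_of_cycleType_eq (hβ.trans rotation.symm) rfl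
  obtain ⟨w, hw⟩ := exists_equiv_semiconj_of_cycleType_eq
    (hγ.trans cycleType_toPerm_one_sigma.symm) rfl
  calc
    _ = Nat.card {L : ZMod 8 → ZMod 8 → Σ k, ZMod (cycleLength k) //
          IsEquivariantLatinSquare L} :=
      Nat.card_congr <| (u.arrowCongr (v.arrowCongr w)).subtypeEquiv fun L =>
        (isEquivariantLatinSquare_arrowCongr_iff hu hv hw L).symm
    _ = _ := card_isEquivariantLatinSquare
    _ = 1408 := card_isTwistedBijection_id
end

section
/- Let α, β be permutations of {1,...,8} that are each a product of two disjoint 4-cycles (cycle type {4,4}) and let γ be the identity permutation of {1,...,8}. Then the number of Latin squares of order 8 having Θ = (α,β,γ) as an autotopism is 23224320. -/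
/-!
If all cycles of `α` and `β` have length `k`, coordinates `(p, a)` in which both permutations act by
`a ↦ a + 1` turn the condition `L (α i) (β j) = L i j` into: `L` at `((p, a), (q, b))` depends only
on `p`, `q` and `b - a`. Such an `L` is a square array of `k`-element cells, and it is Latin exactly
when every symbol occurs once in each row and once in each column of cells. When there are two
cycles, the first row of cells is an arbitrary arrangement of the `2k` symbols; the symbol sets of
the second row are then forced to be those of the first one swapped, and only the orders inside the
two cells remain to be chosen, so that there are `(2k)! * (k!)²` such arrays.
-/

open Function Equiv
open scoped Nat

section OrbitChart

variable {X P : Type*} {k : ℕ}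

/-- Coordinates on `X` in which `σ` is a translation: `e (p, ·)` runs through the `p`-th orbit of
`σ` along `σ`. All orbits then have length `k`, and are infinite when `k = 0`. -/
def IsOrbitChart (σ : Perm X) (e : P × ZMod k ≃ X) : Prop :=
  ∀ p a, σ (e (p, a)) = e (p, a + 1)

theorem exists_isOrbitChart_quotient (σ : Perm X) (hσ : ∀ x : X, MulAction.period σ x = k) :
    ∃ e : Quotient (Perm.SameCycle.setoid σ) × ZMod k ≃ X, IsOrbitChart σ e := by
  have zpow_eq_iff (x : X) (i j : ℤ) : (σ ^ i) x = (σ ^ j) x ↔ (i : ZMod k) = j := by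
    rw [eq_comm, ← Perm.inv_eq_iff_eq, ← Perm.mul_apply, ← zpow_neg, ← zpow_add, ← Perm.smul_def,
      MulAction.zpow_smul_eq_iff_period_dvd, hσ, ZMod.intCast_eq_intCast_iff_dvd_sub,
      neg_add_eq_sub]
  let orbitPoint (y : Quotient (Perm.SameCycle.setoid σ) × ZMod k) : X :=
    (σ ^ (y.2.cast : ℤ)) y.1.out
  have sameCycle_orbitPoint (y) : Perm.SameCycle σ y.1.out (orbitPoint y) := ⟨y.2.cast, rfl⟩
  have orbitPoint_injective : Injective orbitPoint := by
    rintro ⟨p, a⟩ ⟨q, b⟩ h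
    have sameCycle_out : Perm.SameCycle σ p.out q.out :=
      (sameCycle_orbitPoint (p, a)).trans (h ▸ (sameCycle_orbitPoint (q, b)).symm)
    obtain rfl : p = q := Quotient.out_equiv_out.1 sameCycle_out
    simpa [orbitPoint, zpow_eq_iff] using h
  have orbitPoint_surjective : Surjective orbitPoint := fun x ↦ by
    obtain ⟨i, hi⟩ : Perm.SameCycle σ (⟦x⟧ : Quotient (Perm.SameCycle.setoid σ)).out x :=
      Quotient.mk_out (s := Perm.SameCycle.setoid σ) x
    exact ⟨(⟦x⟧, i), ((zpow_eq_iff _ _ _).2 (by simp)).trans hi⟩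
  refine ⟨ofBijective orbitPoint ⟨orbitPoint_injective, orbitPoint_surjective⟩, fun p a ↦ ?_⟩
  calc
    σ (orbitPoint (p, a)) = (σ ^ (1 + a.cast : ℤ)) p.out := by rw [zpow_one_add]; rfl
    _ = orbitPoint (p, a + 1) := (zpow_eq_iff _ _ _).2 (by simp [add_comm])

variable [Fintype X] [DecidableEq X]

theorem period_eq_card_support_cycleOf (σ : Perm X) {x : X} (hx : σ x ≠ x) :
    MulAction.period σ x = (σ.cycleOf x).support.card := by
  refine Nat.dvd_right_iff_eq.1 fun n ↦ ?_
  rw [← MulAction.pow_smul_eq_iff_period_dvd, Perm.smul_def]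
  exact (σ.isCycleOn_support_cycleOf x).pow_apply_eq
    (Perm.mem_support_cycleOf_iff.2 ⟨.refl σ x, Perm.mem_support.2 hx⟩)

theorem period_eq_of_cycleType_eq_replicate {σ : Perm X} {m : ℕ}
    (hσ : σ.cycleType = Multiset.replicate m k) (hX : Fintype.card X = m * k) (x : X) :
    MulAction.period σ x = k := by
  have support_eq_univ : σ.support = Finset.univ := by
    rw [← Finset.card_eq_iff_eq_univ, ← Perm.sum_cycleType, hσ, hX, Multiset.sum_replicate,
      smul_eq_mul]
  have hx : x ∈ σ.support := support_eq_univ ▸ Finset.mem_univ x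
  have mem_cycleType : (σ.cycleOf x).support.card ∈ σ.cycleType :=
    Perm.cycleType_def σ ▸
      Multiset.mem_map_of_mem _ (Perm.cycleOf_mem_cycleFactorsFinset_iff.2 hx)
  rw [period_eq_card_support_cycleOf σ (Perm.mem_support.1 hx)]
  exact Multiset.eq_of_mem_replicate (hσ ▸ mem_cycleType)

theorem exists_isOrbitChart_of_cycleType_eq_replicate [Fintype P] {σ : Perm X}
    (hσ : σ.cycleType = Multiset.replicate (Fintype.card P) k)
    (hX : Fintype.card X = Fintype.card P * k) :
    ∃ e : P × ZMod k ≃ X, IsOrbitChart σ e := by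
  obtain ⟨e, he⟩ :=
    exists_isOrbitChart_quotient σ (period_eq_of_cycleType_eq_replicate hσ hX)
  have card_quotient : Nat.card (Quotient (Perm.SameCycle.setoid σ)) = Nat.card P := by
    rw [Nat.card_eq_fintype_card (α := P)]
    rcases isEmpty_or_nonempty P with hP | hP
    · have : IsEmpty X := Fintype.card_eq_zero_iff.1 (by simp [hX])
      simp
    · have mem_cycleType : k ∈ σ.cycleType :=
        hσ ▸ Multiset.mem_replicate.2 ⟨Fintype.card_ne_zero, rfl⟩
      refine Nat.eq_of_mul_eq_mul_right (Perm.one_lt_of_mem_cycleType mem_cycleType).pos ?_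
      rw [← hX, ← Nat.card_eq_fintype_card, ← Nat.card_congr e, Nat.card_prod, Nat.card_zmod]
  obtain ⟨c⟩ := Finite.card_eq.1 card_quotient
  exact ⟨(c.symm.prodCongr (Equiv.refl _)).trans e, fun p a ↦ he _ a⟩

end OrbitChart

section SemiLatin

variable {P Q D S : Type*}

/-- A semi-Latin square: each cell `(p, q)` holds a family of symbols indexed by `D`, and each
symbol occurs exactly once in each row and in each column of cells. The places inside a cell are
labelled by `D`, so that reordering the symbols of a cell gives a different `f`. -/
def IsSemiLatin (f : P → Q → D → S) : Prop :=
  (∀ p, Bijective (uncurry (f p))) ∧ ∀ q, Bijective (uncurry fun p ↦ f p q)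

/-- The `2 × 2` array of cells with first row `g`, and whose second row is obtained from `g` by
exchanging the cells and permuting their contents by `π`. -/
def stackRows (g : Bool × D ≃ S) (π : Bool → Perm D) : Bool → Bool → D → S
  | false, q, d => g (q, d)
  | true, q, d => g (!q, π q d)

theorem isSemiLatin_stackRows (g : Bool × D ≃ S) (π : Bool → Perm D) :
    IsSemiLatin (stackRows g π) := by
  constructor
  · rintro (_ | _)
    · exact g.bijective
    · exact ((prodShear boolNot π).trans g).bijective
  · intro q
    let cellOfRow : Perm Bool := bif q then boolNot else Equiv.refl Bool
    let orderOfRow (p : Bool) : Perm D := bif p then π q else Equiv.refl D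
    convert ((prodShear cellOfRow orderOfRow).trans g).bijective using 1
    ext ⟨p, d⟩
    cases p <;> cases q <;> rfl

theorem stackRows_injective : Injective (uncurry (stackRows (D := D) (S := S))) := by
  rintro ⟨g, π⟩ ⟨g', π'⟩ h
  have stackRows_eq (p q : Bool) (d : D) : stackRows g π p q d = stackRows g' π' p q d :=
    congrFun (congrFun (congrFun h p) q) d
  obtain rfl : g = g' := Equiv.ext fun y ↦ stackRows_eq false y.1 y.2
  obtain rfl : π = π' := by
    ext q d
    simpa [stackRows] using stackRows_eq true q d
  rfl

namespace IsSemiLatin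

variable {f : P → Q → D → S}

theorem row_inj (hf : IsSemiLatin f) {p : P} {q q' : Q} {d d' : D} :
    f p q d = f p q' d' ↔ q = q' ∧ d = d' :=
  ((hf.1 p).injective.eq_iff (a := (q, d)) (b := (q', d'))).trans Prod.mk_inj

theorem col_inj (hf : IsSemiLatin f) {p p' : P} {q : Q} {d d' : D} :
    f p q d = f p' q d' ↔ p = p' ∧ d = d' :=
  ((hf.2 q).injective.eq_iff (a := (p, d)) (b := (p', d'))).trans Prod.mk_inj

theorem range_true_eq_range_false_not {f : Bool → Bool → D → S} (hf : IsSemiLatin f) (q : Bool) :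
    Set.range (f true q) = Set.range (f false (!q)) := by
  apply Set.Subset.antisymm
  · rintro _ ⟨d, rfl⟩
    obtain ⟨⟨q', d'⟩, h⟩ := (hf.1 false).surjective (f true q d)
    have hq' : q' ≠ q := by
      rintro rfl
      simpa using hf.col_inj.1 h
    exact ⟨d', Bool.eq_not_of_ne hq' ▸ h⟩
  · rintro _ ⟨d, rfl⟩
    obtain ⟨⟨p, d'⟩, h⟩ := (hf.2 q).surjective (f false (!q) d)
    have hp : p ≠ false := by
      rintro rfl
      simpa using hf.row_inj.1 h
    exact ⟨d', Bool.eq_true_of_not_eq_false hp ▸ h⟩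

theorem exists_stackRows_eq {f : Bool → Bool → D → S} (hf : IsSemiLatin f) :
    ∃ g π, stackRows g π = f := by
  have exists_perm (q : Bool) : ∃ π : Perm D, ∀ d, f false (!q) (π d) = f true q d := by
    have cell_injective (p q : Bool) : Injective (f p q) := fun d d' h ↦ (hf.row_inj.1 h).2
    let π := (ofInjective _ (cell_injective true q)).trans
      ((setCongr (hf.range_true_eq_range_false_not q)).trans
        (ofInjective _ (cell_injective false (!q))).symm)
    exact ⟨π, fun d ↦ apply_ofInjective_symm (cell_injective false (!q)) _⟩
  choose π hπ using exists_perm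
  refine ⟨ofBijective _ (hf.1 false), π, ?_⟩
  ext (_ | _) q d
  · rfl
  · exact hπ q d

end IsSemiLatin

theorem card_isSemiLatin_bool :
    Nat.card {f : Bool → Bool → D → S // IsSemiLatin f} =
      Nat.card (Bool × D ≃ S) * Nat.card (Perm D) ^ 2 := by
  have setOf_eq_range :
      {f : Bool → Bool → D → S | IsSemiLatin f} = Set.range (uncurry stackRows) := by
    ext f
    refine ⟨fun hf ↦ ?_, ?_⟩
    · obtain ⟨g, π, rfl⟩ := hf.exists_stackRows_eq
      exact ⟨(g, π), rfl⟩
    · rintro ⟨⟨g, π⟩, rfl⟩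
      exact isSemiLatin_stackRows g π
  calc
    _ = Nat.card (Set.range (uncurry (stackRows (D := D) (S := S)))) := by
      rw [← setOf_eq_range]; rfl
    _ = Nat.card ((Bool × D ≃ S) × (Bool → Perm D)) :=
      Nat.card_range_of_injective stackRows_injective
    _ = _ := by simp [Nat.card_prod, Nat.card_fun]

end SemiLatin

section Develop

variable {P Q X Y S : Type*} {k n : ℕ}

/-- The array on `X × Y` that a family of cells determines by translating it along the coordinates
`e` and `e'`: it is constant on the orbits of the simultaneous translation of rows and columns. -/
def develop (e : P × ZMod k ≃ X) (e' : Q × ZMod k ≃ Y) (f : P → Q → ZMod k → S) (i : X) (j : Y) :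
    S :=
  f (e.symm i).1 (e'.symm j).1 ((e'.symm j).2 - (e.symm i).2)

@[simp]
theorem develop_apply (e : P × ZMod k ≃ X) (e' : Q × ZMod k ≃ Y) (f : P → Q → ZMod k → S)
    (p : P) (q : Q) (a b : ZMod k) : develop e e' f (e (p, a)) (e' (q, b)) = f p q (b - a) := by
  simp [develop]

theorem develop_injective (e : P × ZMod k ≃ X) (e' : Q × ZMod k ≃ Y) :
    Injective (develop (S := S) e e') := fun f f' h ↦ by
  ext p q d
  simpa using congrFun (congrFun h (e (p, 0))) (e' (q, d))

theorem exists_develop_eq_iff {α : Perm X} {β : Perm Y} {e : P × ZMod k ≃ X} {e' : Q × ZMod k ≃ Y}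
    (he : IsOrbitChart α e) (he' : IsOrbitChart β e') (L : X → Y → S) :
    (∃ f, develop e e' f = L) ↔ ∀ i j, L (α i) (β j) = L i j := by
  constructor
  · rintro ⟨f, rfl⟩ i j
    obtain ⟨⟨p, a⟩, rfl⟩ := e.surjective i
    obtain ⟨⟨q, b⟩, rfl⟩ := e'.surjective j
    rw [he, he', develop_apply, develop_apply, add_sub_add_right_eq_sub]
  · intro hL
    have apply_add_intCast (p : P) (q : Q) (a b : ZMod k) (i : ℤ) :
        L (e (p, a + i)) (e' (q, b + i)) = L (e (p, a)) (e' (q, b)) := by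
      induction i with
      | zero => simp
      | succ i ih => simpa [← add_assoc, ← he _, ← he' _, hL] using ih
      | pred i ih =>
        rw [← ih, ← hL, he, he']
        simp [add_assoc]
    refine ⟨fun p q d ↦ L (e (p, 0)) (e' (q, d)), ?_⟩
    ext i j
    obtain ⟨⟨p, a⟩, rfl⟩ := e.surjective i
    obtain ⟨⟨q, b⟩, rfl⟩ := e'.surjective j
    simpa using (apply_add_intCast p q 0 (b - a) a.cast).symm

theorem isLatinSquare_develop_iff (e : P × ZMod k ≃ Fin n) (e' : Q × ZMod k ≃ Fin n)
    (f : P → Q → ZMod k → Fin n) : IsLatinSquare (develop e e' f) ↔ IsSemiLatin f := by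
  have row_bijective_iff (p : P) (a : ZMod k) :
      Bijective (develop e e' f (e (p, a))) ↔ Bijective (uncurry (f p)) := by
    have develop_eq : develop e e' f (e (p, a)) =
        uncurry (f p) ∘ e'.symm.trans (prodCongr (Equiv.refl Q) (Equiv.subRight a)) := by
      ext j : 1
      simp [develop, uncurry]
    rw [develop_eq, Equiv.bijective_comp]
  have col_bijective_iff (q : Q) (b : ZMod k) :
      Bijective (fun i ↦ develop e e' f i (e' (q, b))) ↔ Bijective (uncurry fun p ↦ f p q) := by
    have develop_eq : (fun i ↦ develop e e' f i (e' (q, b))) =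
        (uncurry fun p ↦ f p q) ∘ e.symm.trans (prodCongr (Equiv.refl P) (Equiv.subLeft b)) := by
      ext i : 1
      simp [develop, uncurry]
    rw [develop_eq, Equiv.bijective_comp]
  refine and_congr (e.forall_congr_right.symm.trans ?_) (e'.forall_congr_right.symm.trans ?_)
  · simp only [Prod.forall, row_bijective_iff, forall_const]
  · simp only [Prod.forall, col_bijective_iff, forall_const]

theorem card_isLatinSquare_isAutotopism_one {α β : Perm (Fin n)} {e : P × ZMod k ≃ Fin n}
    {e' : Q × ZMod k ≃ Fin n} (he : IsOrbitChart α e) (he' : IsOrbitChart β e') :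
    Nat.card {L : Fin n → Fin n → Fin n // IsLatinSquare L ∧ IsAutotopism α β 1 L} =
      Nat.card {f : P → Q → ZMod k → Fin n // IsSemiLatin f} := by
  have setOf_eq_image :
      {L : Fin n → Fin n → Fin n | IsLatinSquare L ∧ IsAutotopism α β 1 L} =
        develop e e' '' {f | IsSemiLatin f} := by
    ext L
    refine ⟨fun ⟨hL, hαβ⟩ ↦ ?_, ?_⟩
    · obtain ⟨f, rfl⟩ := (exists_develop_eq_iff he he' L).2 hαβ
      exact ⟨f, (isLatinSquare_develop_iff e e' f).1 hL, rfl⟩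
    · rintro ⟨f, hf, rfl⟩
      exact ⟨(isLatinSquare_develop_iff e e' f).2 hf, (exists_develop_eq_iff he he' _).1 ⟨f, rfl⟩⟩
  calc
    _ = Nat.card (develop e e' '' {f | IsSemiLatin f}) := by rw [← setOf_eq_image]; rfl
    _ = _ := Nat.card_image_of_injective (develop_injective e e') _

end Develop

theorem delta_4444_id_general {n k : ℕ} (α β γ : Perm (Fin n)) (hn : n = 2 * k)
    (hα : α.cycleType = {k, k}) (hβ : β.cycleType = {k, k}) (hγ : γ = 1) :
    Nat.card {L : Fin n → Fin n → Fin n // IsLatinSquare L ∧ IsAutotopism α β γ L} =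
      n ! * k ! ^ 2 := by
  subst hγ
  have hcard : Fintype.card (Fin n) = Fintype.card Bool * k := by simpa using hn
  obtain ⟨e, he⟩ := exists_isOrbitChart_of_cycleType_eq_replicate (P := Bool) hα hcard
  obtain ⟨e', he'⟩ := exists_isOrbitChart_of_cycleType_eq_replicate (P := Bool) hβ hcard
  have mem_cycleType : k ∈ α.cycleType := hα ▸ by simp
  have : NeZero k := ⟨(Perm.one_lt_of_mem_cycleType mem_cycleType).pos.ne'⟩
  rw [card_isLatinSquare_isAutotopism_one he he', card_isSemiLatin_bool,
    Nat.card_congr (e.equivCongr (Equiv.refl (Fin n))), Nat.card_perm, Nat.card_perm,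
    Nat.card_fin, Nat.card_zmod]

theorem delta_4444_id (α β γ : Equiv.Perm (Fin 8))
    (hα : α.cycleType = {4, 4}) (hβ : β.cycleType = {4, 4}) (hγ : γ = 1) :
    Nat.card {L : Fin 8 → Fin 8 → Fin 8 // IsLatinSquare L ∧ IsAutotopism α β γ L} =
      23224320 :=
  delta_4444_id_general (k := 4) α β γ rfl hα hβ hγ
end

section
/- Let α, β, γ be permutations of {1,...,8}, each consisting of one fixed point and one 7-cycle (cycle type {7}). Then the number of Latin squares of order 8 having Θ = (α,β,γ) as an autotopism is 931. -/
/-!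
A fixed point and an `n`-cycle form the translation action of a cyclic group `G` of order `n` on
`G ∪ {∞}`, so after relabelling we count the Latin squares on `G ∪ {∞}` that are invariant under
the diagonal action of `G`; here `∞` is `none : Option G`. Such a square has `∞` in its corner and
is determined by its row `1` and its entry `c` at `(∞, 1)`. That row is a permutation `f` of
`G ∪ {∞}` moving `∞`, and the square is Latin exactly when column `1`, formed by the `g * f g⁻¹` and
`c`, is also a bijection moving `∞`. This forces `c` and requires the `g * f g⁻¹` to be distinct.
Cutting `∞` out of its cycle in `f` leaves a near orthomorphism of `G`. Translations on both
sides put near orthomorphisms in canonical form, which accounts for a factor `n ^ 2`; the group of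
order `7` has `19` canonical ones, and `7 ^ 2 * 19 = 931`.
-/

open Equiv Function

section Transport

variable {R R' C C' S S' : Type*}

/-- A Latin square with arbitrary row, column and symbol sets; `IsLatinSquare` is the case where
all three are `Fin n`. It lets us index by a group with a point at infinity. -/
def IsLatin (L : R → C → S) : Prop :=
  (∀ i, Bijective (L i)) ∧ ∀ j, Bijective fun i => L i j

theorem isLatin_arrowCongr_iff (a : R ≃ R') (b : C ≃ C') (c : S ≃ S') (L : R → C → S) :
    IsLatin (a.arrowCongr (b.arrowCongr c) L) ↔ IsLatin L := by
  have row (i : R) :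
      a.arrowCongr (b.arrowCongr c) L (a i) = c ∘ L i ∘ b.symm := by ext; simp
  have col (j : C) : (fun i => a.arrowCongr (b.arrowCongr c) L i (b j)) =
      c ∘ (fun i => L i j) ∘ a.symm := by ext; simp
  simp only [IsLatin, ← a.forall_congr_right, ← b.forall_congr_right, row, col,
    EquivLike.comp_bijective, EquivLike.bijective_comp]

end Transport

section CyclicAction

/-- Invariance of a binary operation under the diagonal action of `G`. -/
def IsEquivariant (G : Type*) {X : Type*} [SMul G X] (L : X → X → X) : Prop :=
  ∀ (g : G) (i j : X), L (g • i) (g • j) = g • L i j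

theorem isEquivariant_iff_of_forall_mem_powers {G X : Type*} [Monoid G] [MulAction G X] {g : G}
    (hg : ∀ x, x ∈ Submonoid.powers g) (L : X → X → X) :
    IsEquivariant G L ↔ ∀ i j, L (g • i) (g • j) = g • L i j := by
  refine ⟨fun h => h g, fun h x => ?_⟩
  obtain ⟨k, rfl⟩ := hg x
  induction k with
  | zero => simp
  | succ k ih =>
    intro i j
    simp only [pow_succ', mul_smul] at ih ⊢
    rw [h, ih]

theorem isEquivariant_arrowCongr_iff {G X R C S : Type*} [Monoid G] [MulAction G X] {g : G}
    (hg : ∀ x, x ∈ Submonoid.powers g) {α : Perm R} {β : Perm C} {γ : Perm S}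
    {a : R ≃ X} {b : C ≃ X} {c : S ≃ X} (ha : ∀ i, a (α i) = g • a i)
    (hb : ∀ j, b (β j) = g • b j) (hc : ∀ s, c (γ s) = g • c s) (L : R → C → S) :
    IsEquivariant G (a.arrowCongr (b.arrowCongr c) L) ↔ ∀ i j, L (α i) (β j) = γ (L i j) := by
  rw [isEquivariant_iff_of_forall_mem_powers hg, ← a.forall_congr_right]
  refine forall_congr' fun i => ?_
  rw [← b.forall_congr_right]
  refine forall_congr' fun j => ?_
  simp [← ha, ← hb, ← hc]

theorem cycleType_permCongr {X Y : Type*} [Fintype X] [DecidableEq X] [Fintype Y] [DecidableEq Y]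
    (e : X ≃ Y) (σ : Perm X) : (e.permCongr σ).cycleType = σ.cycleType := by
  have : e.permCongr σ =
      σ.extendDomain (e.trans (Equiv.subtypeUnivEquiv fun _ => trivial).symm) := by
    ext y
    simp [Perm.extendDomain_apply_subtype]
  rw [this, Perm.cycleType_extendDomain]

variable {G : Type*} [Group G] [Nontrivial G] {g : G} (hg : ∀ x, x ∈ Submonoid.powers g)
include hg

theorem ne_one_of_forall_mem_powers : g ≠ 1 := by
  rintro rfl
  obtain ⟨x, hx⟩ := exists_ne (1 : G)
  exact hx (by simpa [Submonoid.mem_powers_iff, eq_comm] using hg x)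

theorem isCycle_toPerm_option : (MulAction.toPerm g : Perm (Option G)).IsCycle := by
  refine ⟨some 1, by simpa using ne_one_of_forall_mem_powers hg, fun y hy => ?_⟩
  cases y with
  | none => simp at hy
  | some y =>
    obtain ⟨k, rfl⟩ := hg y
    refine ⟨k, ?_⟩
    have pow_eq := map_pow (MulAction.toPermHom G (Option G)) g k
    simpa using (DFunLike.congr_fun pow_eq (some 1)).symm

theorem cycleType_toPerm_option [Fintype G] [DecidableEq G] :
    (MulAction.toPerm g : Perm (Option G)).cycleType = {Nat.card G} := by
  have support_eq : (MulAction.toPerm g : Perm (Option G)).support =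
      Finset.univ.map Embedding.some := by
    ext (_ | x) <;> simp [ne_one_of_forall_mem_powers hg]
  rw [(isCycle_toPerm_option hg).cycleType, support_eq]
  simp

theorem exists_equiv_option_of_cycleType [Finite G] {X : Type*} [Fintype X] [DecidableEq X]
    (hX : Fintype.card X = Nat.card G + 1) {σ : Perm X} (hσ : σ.cycleType = {Nat.card G}) :
    ∃ e : X ≃ Option G, ∀ x, e (σ x) = g • e x := by
  classical
  cases nonempty_fintype G
  let e₀ : X ≃ Option G := Fintype.equivOfCardEq (by simp [hX])
  have conj : IsConj (e₀.permCongr σ) (MulAction.toPerm g) := by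
    rw [Perm.isConj_iff_cycleType_eq, cycleType_permCongr, hσ, cycleType_toPerm_option hg]
  obtain ⟨τ, hτ⟩ := isConj_iff.1 conj
  refine ⟨e₀.trans τ, fun x => ?_⟩
  simpa using DFunLike.congr_fun hτ (τ (e₀ x))

end CyclicAction

section EquivariantSquare

variable {G : Type*} [Group G] {L : Option G → Option G → Option G}

theorem IsEquivariant.flip (h : IsEquivariant G L) : IsEquivariant G (flip L) :=
  fun g i j => h g j i

theorem IsEquivariant.apply_none_none [Nontrivial G] (h : IsEquivariant G L) :
    L none none = none := by
  obtain ⟨g, hg⟩ := exists_ne (1 : G)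
  have fixed : g • L none none = L none none := (h g none none).symm
  cases hL : L none none with
  | none => rfl
  | some x => simp [hL, hg] at fixed

theorem IsEquivariant.apply_none_some (h : IsEquivariant G L) (g : G) :
    L none (some g) = g • L none (some 1) := by
  simpa using h g none (some 1)

theorem IsEquivariant.apply_some (h : IsEquivariant G L) (g : G) (j : Option G) :
    L (some g) j = g • L (some 1) (g⁻¹ • j) := by
  simpa using h g (some 1) (g⁻¹ • j)

theorem IsEquivariant.forall_bijective_iff [Nontrivial G] (h : IsEquivariant G L) :
    (∀ i, Bijective (L i)) ↔ Bijective (L (some 1)) ∧ L none (some 1) ≠ none := by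
  constructor
  · refine fun hL => ⟨hL _, fun h1 => ?_⟩
    simpa using (hL none).1 (h1.trans h.apply_none_none.symm)
  · rintro ⟨h1, hc⟩ (_ | g)
    · obtain ⟨c, hc⟩ := Option.ne_none_iff_exists'.1 hc
      have : L none = Equiv.optionCongr (Equiv.mulRight c) := by
        ext1 (_ | g)
        · exact h.apply_none_none
        · simp [h.apply_none_some g, hc]
      exact this ▸ Equiv.bijective _
    · have : L (some g) = MulAction.toPerm g ∘ L (some 1) ∘ MulAction.toPerm g⁻¹ :=
        funext (h.apply_some g)
      rw [this]
      exact (MulAction.bijective g).comp (h1.comp (MulAction.bijective g⁻¹))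

theorem IsEquivariant.isLatin_iff [Nontrivial G] (h : IsEquivariant G L) :
    IsLatin L ↔ (Bijective (L (some 1)) ∧ L none (some 1) ≠ none) ∧
      (Bijective fun i => L i (some 1)) ∧ L (some 1) none ≠ none :=
  and_congr h.forall_bijective_iff h.flip.forall_bijective_iff

/-- The equivariant square with row `1` equal to `f` and entry `c` in row `∞` and column `1`. -/
def equivariantSquare (f : Option G → Option G) (c : Option G) : Option G → Option G → Option G
  | none, none => none
  | none, some g => g • c
  | some g, j => g • f (g⁻¹ • j)

theorem isEquivariant_equivariantSquare (f : Option G → Option G) (c : Option G) :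
    IsEquivariant G (equivariantSquare f c) := by
  rintro g (_ | i) (_ | j) <;> simp [equivariantSquare, mul_smul]

theorem IsEquivariant.eq_equivariantSquare [Nontrivial G] (h : IsEquivariant G L) :
    L = equivariantSquare (L (some 1)) (L none (some 1)) := by
  ext1 i
  ext1 j
  cases i with
  | some g => exact h.apply_some g j
  | none =>
    cases j with
    | none => exact h.apply_none_none
    | some g => exact h.apply_none_some g

theorem equivariantSquare_some_one (f : Option G → Option G) (c : Option G) :
    equivariantSquare f c (some 1) = f := by
  ext1 j
  simp [equivariantSquare]

theorem equivariantSquare_col_one (f : Option G → Option G) (c : Option G) :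
    (fun i => equivariantSquare f c i (some 1)) = fun i => i.elim c fun g => g • f (some g⁻¹) := by
  ext1 (_ | g) <;> simp [equivariantSquare]

end EquivariantSquare

section FirstRow

theorem existsUnique_bijective_option_elim {α : Type*} [Finite α] {u : α → Option α}
    (hu : Injective u) :
    ∃! c, Bijective fun i : Option α => i.elim c u := by
  have not_surjective : ¬Surjective u := fun h => by
    cases nonempty_fintype α
    simpa using Fintype.card_le_of_surjective u h
  obtain ⟨c, hc⟩ := not_forall.1 not_surjective
  have elim_injective : Injective fun i : Option α => i.elim c u :=
    Option.injective_iff.2 ⟨hu, hc⟩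
  refine ⟨c, Finite.injective_iff_bijective.1 elim_injective, fun c' hc' => ?_⟩
  obtain ⟨_ | x, hx⟩ := hc'.2 c
  · exact hx
  · exact absurd ⟨x, hx⟩ hc

variable {G : Type*} [Group G]

/-- The permutations of `G ∪ {∞}` that occur as row `1` of equivariant Latin squares: `f` moves `∞`,
and the entries `g * f g⁻¹` of column `1` in the rows `g ≠ ∞` are distinct. -/
def IsFirstRow (f : Perm (Option G)) : Prop :=
  f none ≠ none ∧ Injective fun g : G => g • f (some g⁻¹)

section EquivariantLatinSquare

variable [Nontrivial G] {L M : Option G → Option G → Option G}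

theorem IsEquivariant.bijective_elim (eL : IsEquivariant G L) (hL : IsLatin L) :
    Bijective fun i : Option G => i.elim (L none (some 1)) fun g => g • L (some 1) (some g⁻¹) := by
  rw [← equivariantSquare_col_one, ← eL.eq_equivariantSquare]
  exact hL.2 (some 1)

theorem IsEquivariant.isFirstRow (eL : IsEquivariant G L) (hL : IsLatin L) :
    IsFirstRow (Equiv.ofBijective _ (hL.1 (some 1))) :=
  ⟨(eL.isLatin_iff.1 hL).2.2, (Option.injective_iff.1 (eL.bijective_elim hL).1).1⟩

theorem IsEquivariant.eq_of_some_one_eq [Finite G] (eL : IsEquivariant G L) (hL : IsLatin L)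
    (eM : IsEquivariant G M) (hM : IsLatin M) (row : L (some 1) = M (some 1)) : L = M := by
  have colM : Bijective fun i : Option G =>
      i.elim (M none (some 1)) fun g => g • L (some 1) (some g⁻¹) := by
    rw [row]
    exact eM.bijective_elim hM
  have corner : L none (some 1) = M none (some 1) :=
    (existsUnique_bijective_option_elim (eL.isFirstRow hL).2).unique (eL.bijective_elim hL) colM
  rw [eL.eq_equivariantSquare, eM.eq_equivariantSquare, row, corner]

theorem IsFirstRow.isLatin_equivariantSquare {f : Perm (Option G)}
    (hf : IsFirstRow f) {c : Option G}
    (hc : Bijective fun i : Option G => i.elim c fun g => g • f (some g⁻¹)) :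
    IsLatin (equivariantSquare f c) := by
  have c_ne_none : c ≠ none := by
    rintro rfl
    obtain ⟨_ | g, hg⟩ := f.surjective none
    · exact hf.1 hg
    · simpa using @hc.1 none (some g⁻¹) (by simp [hg])
  rw [(isEquivariant_equivariantSquare f c).isLatin_iff, equivariantSquare_some_one,
    equivariantSquare_col_one]
  exact ⟨⟨f.bijective, by simpa [equivariantSquare] using c_ne_none⟩, hc, hf.1⟩

theorem card_isLatin_isEquivariant_eq_card_isFirstRow [Finite G] :
    Nat.card {L : Option G → Option G → Option G // IsLatin L ∧ IsEquivariant G L} =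
      Nat.card {f : Perm (Option G) // IsFirstRow f} := by
  refine Nat.card_congr (Equiv.ofBijective
    (fun L => ⟨Equiv.ofBijective _ (L.2.1.1 (some 1)), L.2.2.isFirstRow L.2.1⟩) ⟨?_, ?_⟩)
  · rintro ⟨L, hL, eL⟩ ⟨M, hM, eM⟩ hLM
    have row : L (some 1) = M (some 1) :=
      funext fun j => DFunLike.congr_fun (congrArg Subtype.val hLM) j
    exact Subtype.ext (eL.eq_of_some_one_eq hL eM hM row)
  · rintro ⟨f, hf⟩
    obtain ⟨c, hc, -⟩ := existsUnique_bijective_option_elim hf.2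
    refine ⟨⟨equivariantSquare f c, hf.isLatin_equivariantSquare hc,
      isEquivariant_equivariantSquare f c⟩, ?_⟩
    exact Subtype.ext (Equiv.ext (congrFun (equivariantSquare_some_one f c)))

end EquivariantLatinSquare

end FirstRow

section InsertNone

variable {α : Type*} [DecidableEq α]

/-- Insertion of `∞` into the cycle of `θ` between `t` and `θ t`. -/
def insertNone (t : α) (θ : Perm α) : Perm (Option α) :=
  Perm.decomposeOption.symm (some (θ t), θ)

theorem insertNone_none (t : α) (θ : Perm α) : insertNone t θ none = some (θ t) := by
  simp [insertNone]

theorem insertNone_some (t : α) (θ : Perm α) (x : α) :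
    insertNone t θ (some x) = if x = t then none else some (θ x) := by
  simp [insertNone, swap_apply_def]

theorem injective_ite_none_iff {β : Type*} {t : α} {v : α → β} :
    Injective (fun x => if x = t then none else some (v x)) ↔ Set.InjOn v {t}ᶜ := by
  constructor
  · intro h x hx y hy hxy
    exact h (by simp_all)
  · intro h x y hxy
    by_cases hx : x = t <;> by_cases hy : y = t
    · exact hx.trans hy.symm
    · simp [hx, hy] at hxy
    · simp [hx, hy] at hxy
    · exact h hx hy (by simpa [hx, hy] using hxy)

theorem insertNone_injective :
    Injective (fun p : α × Perm α => insertNone p.1 p.2) := by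
  rintro ⟨s, θ⟩ ⟨t, ψ⟩ h
  obtain ⟨h1, rfl⟩ := Prod.ext_iff.1 (Perm.decomposeOption.symm.injective h)
  simpa using h1

theorem exists_insertNone_eq {f : Perm (Option α)} (hf : f none ≠ none) :
    ∃ t θ, insertNone t θ = f := by
  obtain ⟨d, hd⟩ := Option.ne_none_iff_exists'.1 hf
  obtain ⟨⟨_, θ⟩, rfl⟩ := Perm.decomposeOption.symm.surjective f
  refine ⟨θ.symm d, θ, ?_⟩
  simp_all [insertNone]

end InsertNone

section NearOrthomorphism

variable {G : Type*} [Group G]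

/-- Near orthomorphisms of `G`: bijections `G \ {t} → G \ {d}` such that `x ↦ x⁻¹ * θ x` is
injective. Such a bijection is encoded as the permutation of `G` that extends it by `t ↦ d`. -/
def IsNearOrthomorphism (t : G) (θ : Perm G) : Prop :=
  Set.InjOn (fun x => x⁻¹ * θ x) {t}ᶜ

/-- Near orthomorphisms in canonical form: those from `G \ {1}` to `G \ {1}`. -/
def IsCanonicalNearOrthomorphism (θ : Perm G) : Prop :=
  θ 1 = 1 ∧ IsNearOrthomorphism 1 θ

theorem IsNearOrthomorphism.translate {s t : G} {θ : Perm G} (h : IsNearOrthomorphism (s * t) θ)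
    (d : G) :
    IsNearOrthomorphism s ((Equiv.mulRight t).trans (θ.trans (Equiv.mulRight d))) := by
  intro x hx y hy hxy
  have : x * t = y * t := h (by simpa using hx) (by simpa using hy)
    (mul_left_cancel (a := t) (by simpa [← mul_assoc] using hxy))
  exact mul_right_cancel this

/-- Normalisation of near orthomorphisms by translations; the pair in `G × G` records the points
omitted from the domain and from the range. -/
def nearOrthomorphismEquiv :
    {p : G × Perm G // IsNearOrthomorphism p.1 p.2} ≃
      (G × G) × {θ : Perm G // IsCanonicalNearOrthomorphism θ} where
  toFun p := ((p.1.1, p.1.2 p.1.1),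
    ⟨(Equiv.mulRight p.1.1).trans (p.1.2.trans (Equiv.mulRight (p.1.2 p.1.1)⁻¹)),
      by simp, IsNearOrthomorphism.translate (by simpa using p.2) _⟩)
  invFun q := ⟨(q.1.1, (Equiv.mulRight q.1.1⁻¹).trans (q.2.1.trans (Equiv.mulRight q.1.2))),
    IsNearOrthomorphism.translate (by simpa using q.2.2.2) _⟩
  left_inv p := by ext <;> simp
  right_inv q := by ext <;> simp [q.2.2.1]

theorem isFirstRow_insertNone_iff [DecidableEq G] (t : G) (θ : Perm G) :
    IsFirstRow (insertNone t θ) ↔ IsNearOrthomorphism t θ := by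
  have entry (x : G) : x⁻¹ • insertNone t θ (some x) =
      if x = t then none else some (x⁻¹ * θ x) := by
    rw [insertNone_some]
    split <;> simp
  rw [IsFirstRow, ← (Equiv.inv G).injective_comp]
  simp [insertNone_none, comp_def, entry, injective_ite_none_iff, IsNearOrthomorphism]

theorem card_isFirstRow :
    Nat.card {f : Perm (Option G) // IsFirstRow f} =
      Nat.card {p : G × Perm G // IsNearOrthomorphism p.1 p.2} := by
  classical
  refine (Nat.card_congr (Equiv.ofBijective
    (fun p => ⟨insertNone p.1.1 p.1.2, (isFirstRow_insertNone_iff _ _).2 p.2⟩) ⟨?_, ?_⟩)).symm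
  · exact fun p q h => Subtype.ext (insertNone_injective (congrArg Subtype.val h))
  · rintro ⟨f, hf⟩
    obtain ⟨t, θ, rfl⟩ := exists_insertNone_eq hf.1
    exact ⟨⟨(t, θ), (isFirstRow_insertNone_iff t θ).1 hf⟩, rfl⟩

theorem card_isLatin_isEquivariant [Nontrivial G] [Finite G] :
    Nat.card {L : Option G → Option G → Option G // IsLatin L ∧ IsEquivariant G L} =
      Nat.card G ^ 2 * Nat.card {θ : Perm G // IsCanonicalNearOrthomorphism θ} := by
  rw [card_isLatin_isEquivariant_eq_card_isFirstRow, card_isFirstRow,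
    Nat.card_congr nearOrthomorphismEquiv, Nat.card_prod, Nat.card_prod, sq]

end NearOrthomorphism

theorem card_isCanonicalNearOrthomorphism_seven :
    Nat.card {θ : Perm (Multiplicative (ZMod 7)) // IsCanonicalNearOrthomorphism θ} = 19 := by
  have : Fintype.card {θ : Perm (Multiplicative (ZMod 7)) //
      θ 1 = 1 ∧ ∀ x, x ≠ 1 → ∀ y, y ≠ 1 → x⁻¹ * θ x = y⁻¹ * θ y → x = y} = 19 := by
    decide +kernel
  rw [← this, ← Nat.card_eq_fintype_card]
  rfl

theorem delta_777_general {G : Type*} [Group G] [IsCyclic G] {n : ℕ} (hG : Nat.card G = n)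
    (α β γ : Perm (Fin (n + 1)))
    (hα : α.cycleType = {n}) (hβ : β.cycleType = {n}) (hγ : γ.cycleType = {n}) :
    Nat.card {L : Fin (n + 1) → Fin (n + 1) → Fin (n + 1) //
        IsLatinSquare L ∧ IsAutotopism α β γ L} =
      n ^ 2 * Nat.card {θ : Perm G // IsCanonicalNearOrthomorphism θ} := by
  subst hG
  have one_lt : 1 < Nat.card G := Perm.one_lt_of_mem_cycleType (hα ▸ Multiset.mem_singleton_self _)
  have : Finite G := Nat.finite_of_card_ne_zero (by lia)
  have : Nontrivial G := Finite.one_lt_card_iff_nontrivial.1 one_lt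
  obtain ⟨g, hg⟩ := IsCyclic.exists_monoid_generator (α := G)
  obtain ⟨a, ha⟩ := exists_equiv_option_of_cycleType hg (Fintype.card_fin _) hα
  obtain ⟨b, hb⟩ := exists_equiv_option_of_cycleType hg (Fintype.card_fin _) hβ
  obtain ⟨c, hc⟩ := exists_equiv_option_of_cycleType hg (Fintype.card_fin _) hγ
  rw [← card_isLatin_isEquivariant]
  exact Nat.card_congr (Equiv.subtypeEquiv (a.arrowCongr (b.arrowCongr c)) fun L =>
    (and_congr (isLatin_arrowCongr_iff a b c L) (isEquivariant_arrowCongr_iff hg ha hb hc L)).symm)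

theorem delta_777 (α β γ : Equiv.Perm (Fin 8))
    (hα : α.cycleType = {7}) (hβ : β.cycleType = {7}) (hγ : γ.cycleType = {7}) :
    Nat.card {L : Fin 8 → Fin 8 → Fin 8 // IsLatinSquare L ∧ IsAutotopism α β γ L} =
      931 := by
  rw [delta_777_general (G := Multiplicative (ZMod 7)) (by simp) α β γ hα hβ hγ,
    card_isCanonicalNearOrthomorphism_seven]
  norm_num
end

section
/- Let α, β, γ be permutations of {1,...,9} that are all 9-cycles (cycle type {9}). Then the number of Latin squares of order 9 having Θ = (α,β,γ) as an autotopism is 2025. -/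
/-!
Each of the three 9-cycles becomes `x ↦ x + 1` once the points are labelled by `ZMod 9`, so a square
with autotopism `(α, β, γ)` is developed along its diagonals from its first row `f`, with entry
`f (j - i) + i` in the cell `(i, j)`. Its rows are permutations iff `f` is one, its columns iff
`x ↦ f x - x` is one, so the Latin squares correspond to the orthomorphisms of `ZMod 9`, that is, to
the transversals of its subtraction table. Left translation shows that the value of a transversal in
the first row can be fixed at the cost of a factor `9`, and a row-by-row search over the other eight
rows finds `225` transversals: `9 * 225 = 2025`.
-/

open Finset Function

section Transversal

variable {R C S : Type*}

/-- A transversal of the array `T` inside the columns `A` and the symbols `B`: a choice `f` of one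
cell in each row, no two in the same column or carrying the same symbol. Restricting the columns
and symbols to `A` and `B` allows transversals to be built one row at a time. -/
def IsTransversal (T : R → C → S) (A : Finset C) (B : Finset S) (f : R → C) : Prop :=
  (Injective f ∧ ∀ i, f i ∈ A) ∧ Injective (fun i => T i (f i)) ∧ ∀ i, T i (f i) ∈ B

theorem isTransversal_map_comp_iff {T : R → C → S} {σ : Equiv.Perm C} {τ : Equiv.Perm S}
    (hT : ∀ i a, T i (σ a) = τ (T i a)) {A : Finset C} {B : Finset S} {f : R → C} :
    IsTransversal T (A.map σ.toEmbedding) (B.map τ.toEmbedding) (σ ∘ f) ↔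
      IsTransversal T A B f := by
  simp [IsTransversal, Injective, hT]

theorem injective_cons_and_forall_mem_iff [DecidableEq C] {k : ℕ} {a : C} {g : Fin k → C}
    {A : Finset C} :
    (Injective (Fin.cons a g : Fin (k + 1) → C) ∧ ∀ i, (Fin.cons a g : Fin (k + 1) → C) i ∈ A) ↔
      a ∈ A ∧ Injective g ∧ ∀ i, g i ∈ A.erase a := by
  simp only [Fin.cons_injective_iff, Fin.forall_fin_succ, Fin.cons_zero, Fin.cons_succ,
    Set.mem_range, not_exists, mem_erase, forall_and]
  tauto

variable [DecidableEq C] [DecidableEq S] {k : ℕ}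

theorem isTransversal_cons_iff {T : Fin (k + 1) → C → S} {A : Finset C} {B : Finset S}
    {a : C} {g : Fin k → C} :
    IsTransversal T A B (Fin.cons a g : Fin (k + 1) → C) ↔
      (a ∈ A ∧ T 0 a ∈ B) ∧ IsTransversal (Fin.tail T) (A.erase a) (B.erase (T 0 a)) g := by
  have symbols_cons : (fun i => T i ((Fin.cons a g : Fin (k + 1) → C) i)) =
      Fin.cons (T 0 a) fun i => Fin.tail T i (g i) := by
    funext i
    cases i using Fin.cases <;> rfl
  have symbols_iff : (Injective (fun i => T i ((Fin.cons a g : Fin (k + 1) → C) i)) ∧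
        ∀ i, T i ((Fin.cons a g : Fin (k + 1) → C) i) ∈ B) ↔
      T 0 a ∈ B ∧ Injective (fun i => Fin.tail T i (g i)) ∧
        ∀ i, Fin.tail T i (g i) ∈ B.erase (T 0 a) := by
    rw [← injective_cons_and_forall_mem_iff, ← symbols_cons]
  rw [IsTransversal, IsTransversal, injective_cons_and_forall_mem_iff, symbols_iff]
  tauto

/-- The number of transversals of a `k`-rowed array inside the columns `A` and the symbols `B`,
computed by choosing the cell of the first row and deleting its column and its symbol. -/
def transversalCount : {k : ℕ} → (Fin k → C → S) → Finset C → Finset S → ℕ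
  | 0, _, _, _ => 1
  | _ + 1, T, A, B =>
    ∑ a ∈ A with T 0 a ∈ B, transversalCount (Fin.tail T) (A.erase a) (B.erase (T 0 a))

theorem card_isTransversal_succ [Finite C] (T : Fin (k + 1) → C → S) (A : Finset C)
    (B : Finset S) :
    Nat.card {f // IsTransversal T A B f} = ∑ a ∈ A with T 0 a ∈ B,
      Nat.card {g // IsTransversal (Fin.tail T) (A.erase a) (B.erase (T 0 a)) g} := by
  cases nonempty_fintype C
  let P (a : C) (g : Fin k → C) : Prop := (a ∈ A ∧ T 0 a ∈ B) ∧
    IsTransversal (Fin.tail T) (A.erase a) (B.erase (T 0 a)) g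
  have splitFirst : {f // IsTransversal T A B f} ≃ Σ a, {g // P a g} :=
    ((Fin.consEquiv fun _ => C).subtypeEquiv fun _ => isTransversal_cons_iff.symm).symm.trans
      (Equiv.subtypeProdEquivSigmaSubtype P)
  have card_fiber (a : C) : Nat.card {g // P a g} = if a ∈ A ∧ T 0 a ∈ B then
      Nat.card {g // IsTransversal (Fin.tail T) (A.erase a) (B.erase (T 0 a)) g} else 0 := by
    split_ifs with h <;> simp [P, h]
  rw [Nat.card_congr splitFirst, Nat.card_sigma, sum_congr rfl fun a _ => card_fiber a,
    ← sum_filter, ← filter_filter, filter_univ_mem]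

theorem card_isTransversal [Finite C] (T : Fin k → C → S) (A : Finset C) (B : Finset S) :
    Nat.card {f // IsTransversal T A B f} = transversalCount T A B := by
  induction k generalizing A B with
  | zero => simp [transversalCount, IsTransversal, injective_of_subsingleton]
  | succ k ih => simp only [card_isTransversal_succ, ih, transversalCount]

theorem transversalCount_map [Finite C] {T : Fin k → C → S} {σ : Equiv.Perm C}
    {τ : Equiv.Perm S} (hT : ∀ i a, T i (σ a) = τ (T i a)) (A : Finset C) (B : Finset S) :
    transversalCount T (A.map σ.toEmbedding) (B.map τ.toEmbedding) = transversalCount T A B := by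
  rw [← card_isTransversal, ← card_isTransversal]
  exact Nat.card_congr ((Equiv.arrowCongr (Equiv.refl _) σ).subtypeEquiv fun _ =>
    (isTransversal_map_comp_iff hT).symm).symm

end Transversal

section Orthomorphism

variable {G : Type*} [AddGroup G]

/-- An orthomorphism of the group `G`: a permutation `f` of `G` for which `x ↦ f x - x` is also a
permutation. -/
def IsOrthomorphism (f : G → G) : Prop :=
  Bijective f ∧ Bijective fun x => f x - x

variable [Fintype G] {k : ℕ}

theorem isTransversal_sub_comp_iff_isOrthomorphism (e : Fin k ≃ G) {f : G → G} :
    IsTransversal (fun i a => a - e i) univ univ (f ∘ e) ↔ IsOrthomorphism f := by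
  have differences : (fun i => (f ∘ e) i - e i) = (fun x => f x - x) ∘ e := rfl
  simp only [IsTransversal, differences, e.injective_comp, mem_univ, implies_true, and_true,
    IsOrthomorphism, Finite.injective_iff_bijective]

variable [DecidableEq G]

theorem transversalCount_sub_univ (d : Fin (k + 1) → G) :
    transversalCount (fun i a => a - d i) univ univ =
      Fintype.card G *
        transversalCount (fun (i : Fin k) a => a - d i.succ)
          (univ.erase 0) (univ.erase (-d 0)) := by
  have translate (c : G) :
      transversalCount (fun (i : Fin k) a => a - d i.succ) (univ.erase c) (univ.erase (c - d 0)) =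
        transversalCount (fun (i : Fin k) a => a - d i.succ)
          (univ.erase 0) (univ.erase (-d 0)) := by
    rw [← transversalCount_map (σ := Equiv.addLeft c) (τ := Equiv.addLeft c)
      (fun i a => add_sub_assoc c a (d i.succ)) (univ.erase 0)]
    simp [map_erase, sub_eq_add_neg]
  simp only [transversalCount, mem_univ, filter_true]
  exact (sum_congr rfl fun c _ => translate c).trans (by simp)

theorem card_isOrthomorphism (e : Fin (k + 1) ≃ G) :
    Nat.card {f : G → G // IsOrthomorphism f} =
      Fintype.card G *
        transversalCount (fun (i : Fin k) a => a - e i.succ)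
          (univ.erase 0) (univ.erase (-e 0)) := by
  rw [← transversalCount_sub_univ, ← card_isTransversal]
  exact Nat.card_congr ((e.symm.arrowCongr (Equiv.refl G)).subtypeEquiv fun _ =>
    (isTransversal_sub_comp_iff_isOrthomorphism e).symm)

end Orthomorphism

section DevelopedSquare

variable {G : Type*} [AddGroup G] {n : ℕ} {u v w : G ≃ Fin n} {f : G → G}

/-- The array developed from its first row `f` along the diagonals of `G × G`, with rows, columns
and symbols labelled by `u`, `v` and `w`: translating row and column by `g` translates the symbol
by `g`. -/
def developedSquare (u v w : G ≃ Fin n) (f : G → G) (x y : Fin n) : Fin n :=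
  w (f (v.symm y - u.symm x) + u.symm x)

theorem developedSquare_apply (i j : G) :
    developedSquare u v w f (u i) (v j) = w (f (j - i) + i) := by
  simp [developedSquare]

theorem developedSquare_injective : Injective (developedSquare u v w) := by
  intro f g hfg
  funext d
  simpa [developedSquare] using congr_fun₂ hfg (u 0) (v d)

theorem bijective_developedSquare_row_iff (x : Fin n) :
    Bijective (developedSquare u v w f x) ↔ Bijective f := by
  have row_eq : developedSquare u v w f x =
      (Equiv.addRight (u.symm x)).trans w ∘ f ∘ v.symm.trans (Equiv.subRight (u.symm x)) := by
    funext y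
    simp [developedSquare]
  rw [row_eq, Equiv.comp_bijective, Equiv.bijective_comp]

theorem bijective_developedSquare_col_iff (y : Fin n) :
    Bijective (fun x => developedSquare u v w f x y) ↔ Bijective fun d => f d - d := by
  have col_eq : (fun x => developedSquare u v w f x y) =
      (Equiv.addRight (v.symm y)).trans w ∘ (fun d => f d - d) ∘
        u.symm.trans (Equiv.subLeft (v.symm y)) := by
    funext x
    simp [developedSquare, sub_eq_add_neg, add_assoc]
  rw [col_eq, Equiv.comp_bijective, Equiv.bijective_comp]

theorem isLatinSquare_developedSquare_iff :
    IsLatinSquare (developedSquare u v w f) ↔ IsOrthomorphism f := by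
  have : Nonempty (Fin n) := ⟨w 0⟩
  simp only [IsLatinSquare, IsOrthomorphism, bijective_developedSquare_row_iff,
    bijective_developedSquare_col_iff, forall_const]

end DevelopedSquare

section Cyclic

variable {n : ℕ} {α β γ : Equiv.Perm (Fin n)}

theorem exists_semiconj_add_one_of_cycleType (hα : α.cycleType = {n}) :
    ∃ u : ZMod n ≃ Fin n, Semiconj u (· + 1) α := by
  have two_le : 2 ≤ n := Equiv.Perm.two_le_of_mem_cycleType (σ := α) (by simp [hα])
  obtain ⟨k, rfl⟩ := Nat.exists_eq_add_of_le' two_le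
  obtain ⟨c, hc⟩ := isConj_iff.1 <| Equiv.Perm.isConj_iff_cycleType_eq.2 <|
    cycleType_finRotate.trans hα.symm
  refine ⟨(ZMod.finEquiv (k + 2)).symm.toEquiv.trans c, fun i => ?_⟩
  simp [← hc, finRotate_apply]

theorem isAutotopism_iff_mem_range_developedSquare [NeZero n] {u v w : ZMod n ≃ Fin n}
    (hu : Semiconj u (· + 1) α) (hv : Semiconj v (· + 1) β) (hw : Semiconj w (· + 1) γ)
    {L : Fin n → Fin n → Fin n} :
    IsAutotopism α β γ L ↔ L ∈ Set.range (developedSquare u v w) := by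
  constructor
  · intro hL
    refine ⟨fun d => w.symm (L (u 0) (v d)), ?_⟩
    have translate (m : ℕ) (d : ZMod n) :
        L (u m) (v (d + m)) = w (w.symm (L (u 0) (v d)) + m) := by
      induction m with
      | zero => simp
      | succ m ih =>
        push_cast
        rw [← add_assoc, ← add_assoc, hu, hv, hw, hL, ih]
    funext x y
    obtain ⟨i, rfl⟩ := u.surjective x
    obtain ⟨j, rfl⟩ := v.surjective y
    obtain ⟨m, rfl⟩ := ZMod.natCast_zmod_surjective i
    rw [developedSquare_apply, ← translate, sub_add_cancel]
  · rintro ⟨f, rfl⟩ x y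
    obtain ⟨i, rfl⟩ := u.surjective x
    obtain ⟨j, rfl⟩ := v.surjective y
    rw [← hu, ← hv, developedSquare_apply, developedSquare_apply, ← hw]
    simp only [add_sub_add_right_eq_sub, add_assoc]

theorem card_isLatinSquare_isAutotopism_of_cycleType
    (hα : α.cycleType = {n}) (hβ : β.cycleType = {n}) (hγ : γ.cycleType = {n}) :
    Nat.card {L : Fin n → Fin n → Fin n // IsLatinSquare L ∧ IsAutotopism α β γ L} =
      Nat.card {f : ZMod n → ZMod n // IsOrthomorphism f} := by
  obtain ⟨u, hu⟩ := exists_semiconj_add_one_of_cycleType hα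
  obtain ⟨v, hv⟩ := exists_semiconj_add_one_of_cycleType hβ
  obtain ⟨w, hw⟩ := exists_semiconj_add_one_of_cycleType hγ
  have : NeZero n := ⟨by rintro rfl; exact (u 0).elim0⟩
  have image_eq : {L | IsLatinSquare L ∧ IsAutotopism α β γ L} =
      developedSquare u v w '' {f | IsOrthomorphism f} := by
    ext L
    simp only [Set.mem_ofPred_eq, isAutotopism_iff_mem_range_developedSquare hu hv hw]
    constructor
    · rintro ⟨hL, f, rfl⟩
      exact ⟨f, isLatinSquare_developedSquare_iff.1 hL, rfl⟩
    · rintro ⟨f, hf, rfl⟩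
      exact ⟨isLatinSquare_developedSquare_iff.2 hf, f, rfl⟩
  exact (Nat.card_congr (Equiv.setCongr image_eq)).trans
    (Nat.card_image_of_injective developedSquare_injective _)

end Cyclic

theorem transversalCount_sub_zmod_nine :
    transversalCount (fun (i : Fin 8) a => a - ZMod.finEquiv 9 i.succ)
      (univ.erase 0) (univ.erase (-ZMod.finEquiv 9 0)) = 225 := by
  decide +kernel

theorem card_isOrthomorphism_zmod_nine :
    Nat.card {f : ZMod 9 → ZMod 9 // IsOrthomorphism f} = 9 * 225 := by
  rw [card_isOrthomorphism (ZMod.finEquiv 9).toEquiv, ZMod.card]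
  exact congrArg (9 * ·) transversalCount_sub_zmod_nine

theorem delta_999 (α β γ : Equiv.Perm (Fin 9))
    (hα : α.cycleType = {9}) (hβ : β.cycleType = {9}) (hγ : γ.cycleType = {9}) :
    Nat.card {L : Fin 9 → Fin 9 → Fin 9 // IsLatinSquare L ∧ IsAutotopism α β γ L} =
      2025 := by
  rw [card_isLatinSquare_isAutotopism_of_cycleType hα hβ hγ, card_isOrthomorphism_zmod_nine]
end

section
/- Let α, β be permutations of {1,...,9} that are 9-cycles (cycle type {9}) and let γ be the identity permutation of {1,...,9}. Then the number of Latin squares of order 9 having Θ = (α,β,γ) as an autotopism is 362880. -/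
/-!
Labelling the rows and the columns along the cycles of `α` and `β` turns both permutations into
`x ↦ x + 1` on `ZMod n`. An autotopism `(α, β, 1)` then says that an entry depends only on the
difference between its column and row labels, through some function `σ`. Such a square is Latin
exactly when `σ` is a bijection, so there are `n!` of them.
-/

open Function Equiv

/-- The square whose entry in row `i` and column `j` is `σ (f j - e i)`: a circulant array whose
rows and columns are labelled by the group `G` through `e` and `f`. -/
def circulantSquare {n : ℕ} {G : Type*} [AddGroup G] (e f : Fin n ≃ G) (σ : G → Fin n) :
    Fin n → Fin n → Fin n :=
  fun i j => σ (f j - e i)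

section AddGroup

variable {n : ℕ} {G : Type*} [AddGroup G] {e f : Fin n ≃ G}

theorem circulantSquare_row_zero (σ : G → Fin n) :
    circulantSquare e f σ (e.symm 0) = σ ∘ f := by
  funext j
  simp only [circulantSquare, apply_symm_apply, sub_zero, comp_apply]

theorem circulantSquare_injective : Injective (circulantSquare e f) := by
  intro σ τ h
  have h_row : σ ∘ f = τ ∘ f := by
    rw [← circulantSquare_row_zero, h, circulantSquare_row_zero]
  exact f.surjective.injective_comp_right h_row

theorem isLatinSquare_circulantSquare_iff {σ : G → Fin n} :
    IsLatinSquare (circulantSquare e f σ) ↔ Bijective σ := by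
  constructor
  · intro hL
    have h_row : Bijective (σ ∘ f) := circulantSquare_row_zero (e := e) σ ▸ hL.1 (e.symm 0)
    exact (f.bijective.of_comp_iff σ).mp h_row
  · intro hσ
    exact ⟨fun i => hσ.comp ((Equiv.subRight (e i)).bijective.comp f.bijective),
      fun j => hσ.comp ((Equiv.subLeft (f j)).bijective.comp e.bijective)⟩

end AddGroup

theorem IsAutotopism.iterate {n : ℕ} {α β γ : Perm (Fin n)} {L : Fin n → Fin n → Fin n}
    (h : IsAutotopism α β γ L) (k : ℕ) (i j : Fin n) :
    L (α^[k] i) (β^[k] j) = γ^[k] (L i j) := by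
  induction k with
  | zero => rfl
  | succ k ih => simp only [iterate_succ_apply', h _ _, ih]

section ZMod

variable {n : ℕ}

theorem two_le_of_cycleType_eq_singleton {α : Perm (Fin n)} (hα : α.cycleType = {n}) : 2 ≤ n :=
  Perm.two_le_of_mem_cycleType (hα ▸ Multiset.mem_singleton_self n)

theorem exists_semiconj_add_one_s18 {α : Perm (Fin n)} (hα : α.cycleType = {n}) :
    ∃ e : Fin n ≃ ZMod n, Semiconj e α (· + 1) := by
  have hn : 2 ≤ n := two_le_of_cycleType_eq_singleton hα
  have : NeZero n := NeZero.of_pos (two_pos.trans_le hn)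
  have h_conj : IsConj α (finRotate n) :=
    Perm.isConj_iff_cycleType_eq.mpr (hα.trans (cycleType_finRotate_of_le hn).symm)
  obtain ⟨c, hc⟩ := isConj_iff.mp h_conj
  refine ⟨c.trans (ZMod.finEquiv n).toEquiv, fun i => ?_⟩
  have h_shift : c (α i) = c i + 1 := by
    rw [← finRotate_apply, ← Perm.mul_apply, mul_inv_eq_iff_eq_mul.mp hc, Perm.mul_apply]
  calc ZMod.finEquiv n (c (α i)) = ZMod.finEquiv n (c i + 1) := by rw [h_shift]
    _ = ZMod.finEquiv n (c i) + 1 := by rw [map_add, map_one]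

variable [NeZero n] {α β : Perm (Fin n)} {e f : Fin n ≃ ZMod n}

theorem isAutotopism_one_iff_exists_circulantSquare (he : Semiconj e α (· + 1))
    (hf : Semiconj f β (· + 1)) {L : Fin n → Fin n → Fin n} :
    IsAutotopism α β 1 L ↔ ∃ σ, circulantSquare e f σ = L := by
  constructor
  · intro h
    refine ⟨fun x => L (e.symm 0) (f.symm x), ?_⟩
    funext i j
    -- Shifting row `i` to the row labelled `0` takes `-e i` steps along `α`.
    obtain ⟨k, hk⟩ := ZMod.natCast_zmod_surjective (-e i)
    have h_row : α^[k] i = e.symm 0 := by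
      rw [eq_symm_apply, (he.iterate_right k) i, add_right_iterate_apply, nsmul_one, hk,
        add_neg_cancel]
    have h_col : β^[k] j = f.symm (f j - e i) := by
      rw [eq_symm_apply, (hf.iterate_right k) j, add_right_iterate_apply, nsmul_one, hk,
        sub_eq_add_neg]
    calc L (e.symm 0) (f.symm (f j - e i)) = L (α^[k] i) (β^[k] j) := by rw [h_row, h_col]
      _ = L i j := by rw [h.iterate, Perm.coe_one, iterate_id, id]
  · rintro ⟨σ, rfl⟩ i j
    simp only [circulantSquare, he i, hf j, add_sub_add_right_eq_sub, Perm.one_apply]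

theorem setOf_isLatinSquare_isAutotopism_one (he : Semiconj e α (· + 1))
    (hf : Semiconj f β (· + 1)) :
    {L | IsLatinSquare L ∧ IsAutotopism α β 1 L} =
      circulantSquare e f '' {σ | Bijective σ} := by
  ext L
  constructor
  · rintro ⟨hL, h_auto⟩
    obtain ⟨σ, rfl⟩ := (isAutotopism_one_iff_exists_circulantSquare he hf).mp h_auto
    exact ⟨σ, isLatinSquare_circulantSquare_iff.mp hL, rfl⟩
  · rintro ⟨σ, hσ, rfl⟩
    exact ⟨isLatinSquare_circulantSquare_iff.mpr hσ,
      (isAutotopism_one_iff_exists_circulantSquare he hf).mpr ⟨σ, rfl⟩⟩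

end ZMod

theorem delta_99_id_general {n : ℕ} {α β : Perm (Fin n)}
    (hα : α.cycleType = {n}) (hβ : β.cycleType = {n}) :
    Nat.card {L : Fin n → Fin n → Fin n // IsLatinSquare L ∧ IsAutotopism α β 1 L} =
      n.factorial := by
  have : NeZero n := NeZero.of_pos (two_pos.trans_le (two_le_of_cycleType_eq_singleton hα))
  obtain ⟨e, he⟩ := exists_semiconj_add_one_s18 hα
  obtain ⟨f, hf⟩ := exists_semiconj_add_one_s18 hβ
  calc Nat.card {L | IsLatinSquare L ∧ IsAutotopism α β 1 L}
      = Nat.card (circulantSquare e f '' {σ | Bijective σ}) := by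
        rw [setOf_isLatinSquare_isAutotopism_one he hf]
    _ = Nat.card {σ : ZMod n → Fin n // Bijective σ} :=
        Nat.card_image_of_injective circulantSquare_injective _
    _ = Nat.card (Perm (Fin n)) :=
        Nat.card_congr (bijectiveEquiv.trans (equivCongr e.symm (Equiv.refl _)))
    _ = n.factorial := by rw [Nat.card_perm, Nat.card_fin]

theorem delta_99_id (α β γ : Equiv.Perm (Fin 9))
    (hα : α.cycleType = {9}) (hβ : β.cycleType = {9}) (hγ : γ = 1) :
    Nat.card {L : Fin 9 → Fin 9 → Fin 9 // IsLatinSquare L ∧ IsAutotopism α β γ L} =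
      362880 := by
  subst hγ
  exact delta_99_id_general hα hβ
end
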